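/- arXiv:2507.14026 — 4 statements merged into one kernel-verified Lean document; each statement's English description precedes it below -/
import Mathlib

section
/- Let λ be a partition, n, m ≥ 1, T ∈ B_λ(n,m), and 1 ≤ i ≤ m−1. Apply the i-bracketing rule to the word w(T), where each position of w(T) corresponds to a unique box of T. Suppose some letter i is unmatched, and let B be the box of T corresponding to the rightmost unmatched letter i; say B carries the entry (k,i). Then the filling T' obtained from T by changing the entry of B from (k,i) to (k,i+1) is again a lexicographic bitableau in B_λ(n,m); moreover a(T') = a(T) and b(T') = b(T) − e_i + e_{i+1} (where e_j is the j-th standard basis vector of ℕ^m). -/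
/-- Lexicographic (weak) order on pairs: `(a,b) ≤ (a',b')` iff `a < a'`, or `a = a'` and `b ≤ b'`. -/
def lexLe (p q : ℕ × ℕ) : Prop := p.1 < q.1 ∨ (p.1 = q.1 ∧ p.2 ≤ q.2)

/-- Lexicographic strict order on pairs. -/
def lexLt (p q : ℕ × ℕ) : Prop := p.1 < q.1 ∨ (p.1 = q.1 ∧ p.2 < q.2)

/-- `T` (a total function on positions, row & column both 0-indexed) is a lexicographic
bitableau of shape `lam` with entries in `[n] × [m]`: on the cells of `lam`, entries are pairs
in `{1,…,n} × {1,…,m}`, weakly increasing along rows and strictly increasing down columns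
for the lexicographic order. -/
def IsBitabT (lam : YoungDiagram) (n m : ℕ) (T : ℕ → ℕ → ℕ × ℕ) : Prop :=
  (∀ i j, (i, j) ∈ lam → (1 ≤ (T i j).1 ∧ (T i j).1 ≤ n) ∧ (1 ≤ (T i j).2 ∧ (T i j).2 ≤ m)) ∧
  (∀ i j j', (i, j') ∈ lam → j ≤ j' → lexLe (T i j) (T i j')) ∧
  (∀ i i' j, (i', j) ∈ lam → i < i' → lexLt (T i j) (T i' j))

/-- `i`-th entry of the `a`-weight of `T`: the number of boxes whose entry has first coordinate `i`. -/
def aWtT (lam : YoungDiagram) (T : ℕ → ℕ → ℕ × ℕ) (i : ℕ) : ℕ :=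
  (lam.cells.filter fun c => (T c.1 c.2).1 = i).card

/-- `j`-th entry of the `b`-weight of `T`: the number of boxes whose entry has second coordinate `j`. -/
def bWtT (lam : YoungDiagram) (T : ℕ → ℕ → ℕ × ℕ) (j : ℕ) : ℕ :=
  (lam.cells.filter fun c => (T c.1 c.2).2 = j).card

/-- The list of boxes of `T` in sort-by-top reading order: boxes with first coordinate
`k = 1, …, n` in increasing order, within each group rows from bottom to top, left to right
within each row. -/
def wBoxes (lam : YoungDiagram) (n : ℕ) (T : ℕ → ℕ → ℕ × ℕ) : List (ℕ × ℕ) :=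
  (List.range n).flatMap fun k =>
    ((List.range (lam.colLen 0)).reverse).flatMap fun r =>
      ((List.range (lam.rowLen r)).filter fun c => decide ((T r c).1 = k + 1)).map fun c => (r, c)

/-- The sort-by-top reading word `w(T)`: the second coordinates of the boxes, in sort-by-top
reading order. -/
def wWordT (lam : YoungDiagram) (n : ℕ) (T : ℕ → ℕ → ℕ × ℕ) : List ℕ :=
  (wBoxes lam n T).map fun c => (T c.1 c.2).2

/-- Under the `i`-bracketing rule (each letter `i` becomes `)`, each letter `i+1` becomes `(`,
other letters are ignored), the letter at position `p` of `w` is an unmatched `)` (letter `i`):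
equivalently, every window of `w` ending at `p` contains strictly more letters `i` than
letters `i+1`. -/
def UnmatchedClose (w : List ℕ) (i p : ℕ) : Prop :=
  p < w.length ∧ w.getD p 0 = i ∧
    ∀ q, q ≤ p →
      ((w.drop q).take (p + 1 - q)).count (i + 1) < ((w.drop q).take (p + 1 - q)).count i

/-- Under the `i`-bracketing rule, the letter at position `p` of `w` is an unmatched `(`
(letter `i+1`): equivalently, every window of `w` starting at `p` contains strictly more
letters `i+1` than letters `i`. -/
def UnmatchedOpen (w : List ℕ) (i p : ℕ) : Prop :=
  p < w.length ∧ w.getD p 0 = i + 1 ∧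
    ∀ q, p ≤ q → q < w.length →
      ((w.drop p).take (q + 1 - p)).count i < ((w.drop p).take (q + 1 - p)).count (i + 1)


theorem count_window (w : List ℕ) (v q k : ℕ) :
    ((w.drop q).take k).count v = ((Finset.Ico q (q + k)).filter fun x => w[x]? = some v).card := by
  induction k with
  | zero => simp
  | succ k ih =>
    rw [List.take_add_one, List.count_append, ih, ← add_assoc, ← Finset.insert_Ico_right_eq_Ico_add_one (by omega),
      Finset.filter_insert, List.getElem?_drop]
    rcases h : w[q + k]? with _ | a
    · simp
    · by_cases hv : a = v
      · simp [hv]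
      · simp [hv]

/-- Reading order on boxes. -/
def readLt (T : ℕ → ℕ → ℕ × ℕ) (X Y : ℕ × ℕ) : Prop :=
  (T X.1 X.2).1 < (T Y.1 Y.2).1 ∨ ((T X.1 X.2).1 = (T Y.1 Y.2).1 ∧
    (Y.1 < X.1 ∨ (X.1 = Y.1 ∧ X.2 < Y.2)))

theorem wBoxes_pairwise (lam : YoungDiagram) (n : ℕ) (T : ℕ → ℕ → ℕ × ℕ) :
    (wBoxes lam n T).Pairwise (readLt T) := by
  unfold wBoxes
  rw [List.pairwise_flatMap]
  constructor
  · intro k _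
    rw [List.pairwise_flatMap]
    constructor
    · intro r _
      rw [List.pairwise_map]
      refine List.Pairwise.imp_of_mem (R := (· < ·)) ?_ (List.pairwise_lt_range.filter _)
      intro a b ha hb hab
      simp only [List.mem_filter, decide_eq_true_eq] at ha hb
      right
      refine ⟨by simp [ha.2, hb.2], Or.inr ⟨rfl, hab⟩⟩
    · rw [List.pairwise_reverse]
      refine List.pairwise_lt_range.imp ?_
      intro a b hab x hx y hy
      simp only [List.mem_map, List.mem_filter, decide_eq_true_eq] at hx hy
      obtain ⟨c, ⟨_, hc⟩, rfl⟩ := hx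
      obtain ⟨d, ⟨_, hd⟩, rfl⟩ := hy
      right
      exact ⟨by simp [hc, hd], Or.inl hab⟩
  · refine List.pairwise_lt_range.imp ?_
    intro a b hab x hx y hy
    simp only [List.mem_flatMap, List.mem_map, List.mem_filter, decide_eq_true_eq] at hx hy
    obtain ⟨r, _, c, ⟨_, hc⟩, rfl⟩ := hx
    obtain ⟨s, _, d, ⟨_, hd⟩, rfl⟩ := hy
    left
    simp only [hc, hd]
    omega

theorem mem_wBoxes (lam : YoungDiagram) (n m : ℕ) (T : ℕ → ℕ → ℕ × ℕ) (hT : IsBitabT lam n m T)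
    (X : ℕ × ℕ) : X ∈ wBoxes lam n T ↔ X ∈ lam := by
  obtain ⟨r, c⟩ := X
  unfold wBoxes
  simp only [List.mem_flatMap, List.mem_map, List.mem_filter, decide_eq_true_eq, List.mem_range,
    List.mem_reverse, Prod.mk.injEq]
  constructor
  · rintro ⟨k, hk, s, hs, d, ⟨hd, _⟩, rfl, rfl⟩
    exact YoungDiagram.mem_iff_lt_rowLen.2 hd
  · intro h
    have h1 := (hT.1 r c h).1
    refine ⟨(T r c).1 - 1, by omega, r, ?_, c, ⟨YoungDiagram.mem_iff_lt_rowLen.1 h, by omega⟩, rfl, rfl⟩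
    exact YoungDiagram.mem_iff_lt_colLen.1 (lam.up_left_mem le_rfl (Nat.zero_le _) h)

theorem readLt_asymm (T : ℕ → ℕ → ℕ × ℕ) {X Y : ℕ × ℕ} (h : readLt T X Y) : ¬ readLt T Y X := by
  unfold readLt at *
  omega

theorem wBoxes_lt_iff (lam : YoungDiagram) (n : ℕ) (T : ℕ → ℕ → ℕ × ℕ) {x y : ℕ} {X Y : ℕ × ℕ}
    (hx : (wBoxes lam n T)[x]? = some X) (hy : (wBoxes lam n T)[y]? = some Y) :
    x < y ↔ readLt T X Y := by
  obtain ⟨hxl, rfl⟩ := List.getElem?_eq_some_iff.1 hx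
  obtain ⟨hyl, rfl⟩ := List.getElem?_eq_some_iff.1 hy
  have hp := List.pairwise_iff_getElem.1 (wBoxes_pairwise lam n T)
  constructor
  · intro h
    exact hp _ _ hxl hyl h
  · intro h
    by_contra hc
    rcases Nat.lt_or_ge y x with h' | h'
    · exact readLt_asymm T h (hp _ _ hyl hxl h')
    · have : x = y := by omega
      subst this
      exact readLt_asymm T h h

theorem wBoxes_le (lam : YoungDiagram) (n : ℕ) (T : ℕ → ℕ → ℕ × ℕ) {x y : ℕ} {X Y : ℕ × ℕ}
    (hx : (wBoxes lam n T)[x]? = some X) (hy : (wBoxes lam n T)[y]? = some Y) (h : x ≤ y) :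
    X = Y ∨ readLt T X Y := by
  rcases h.eq_or_lt with rfl | h
  · left; rw [hx] at hy; exact Option.some.inj hy
  · right; exact (wBoxes_lt_iff lam n T hx hy).1 h

theorem right_ne (lam : YoungDiagram) (n m : ℕ) (T : ℕ → ℕ → ℕ × ℕ) (hT : IsBitabT lam n m T)
    (i p : ℕ) (hp : UnmatchedClose (wWordT lam n T) i p)
    (hrightmost : ∀ p', p < p' → ¬ UnmatchedClose (wWordT lam n T) i p')
    (r c : ℕ) (hB : (wBoxes lam n T)[p]? = some (r, c)) (hmem : (r, c + 1) ∈ lam)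
    (h : T r (c + 1) = T r c) : False := by
  obtain ⟨hpl, hpi, hw⟩ := hp
  obtain ⟨q, hq⟩ := List.mem_iff_getElem?.1 ((mem_wBoxes lam n m T hT _).2 hmem)
  have hpq : p < q := by
    rw [wBoxes_lt_iff lam n T hB hq]
    right; simp [h]
  have hq1 : q = p + 1 := by
    by_contra hne
    have hlt : p + 1 < q := by omega
    have hql : q < (wBoxes lam n T).length := (List.getElem?_eq_some_iff.1 hq).1
    have hz : (wBoxes lam n T)[p+1]? = some ((wBoxes lam n T)[p+1]) :=
      List.getElem?_eq_getElem (by omega)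
    generalize (wBoxes lam n T)[p+1] = Z at hz
    have h1 := (wBoxes_lt_iff lam n T hB hz).1 (by omega)
    have h2 := (wBoxes_lt_iff lam n T hz hq).1 (by omega)
    unfold readLt at h1 h2
    simp only [h] at h1 h2
    omega
  subst hq1
  have hwp : (wWordT lam n T)[p]? = some (T r c).2 := by
    simp [wWordT, hB]
  have hi : (T r c).2 = i := by
    rw [List.getD_eq_getElem?_getD, hwp] at hpi; simpa using hpi
  have hwq : (wWordT lam n T)[p + 1]? = some i := by
    simp [wWordT, hq, h, hi]
  apply hrightmost (p + 1) (by omega)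
  refine ⟨(List.getElem?_eq_some_iff.1 hwq).1, by rw [List.getD_eq_getElem?_getD, hwq]; rfl, ?_⟩
  intro s hs
  have e : p + 1 + 1 - s = (p + 1 - s) + 1 := by omega
  have e2 : s + (p + 1 - s) = p + 1 := by omega
  rw [e, List.take_add_one, List.getElem?_drop, e2, hwq]
  simp only [List.count_append, Option.toList_some, List.count_singleton]
  by_cases hsp : s ≤ p
  · have := hw s hsp
    simp
    omega
  · have : s = p + 1 := by omega
    subst this
    simp

theorem below_ne (lam : YoungDiagram) (n m : ℕ) (T : ℕ → ℕ → ℕ × ℕ) (hT : IsBitabT lam n m T)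
    (i p : ℕ) (hp : UnmatchedClose (wWordT lam n T) i p)
    (r c : ℕ) (hB : (wBoxes lam n T)[p]? = some (r, c)) (hmem : (r + 1, c) ∈ lam)
    (h1 : (T (r + 1) c).1 = (T r c).1) (h2 : (T (r + 1) c).2 = i + 1) : False := by
  obtain ⟨hpl, hpi, hw⟩ := hp
  have hwp : (wWordT lam n T)[p]? = some (T r c).2 := by
    simp [wWordT, hB]
  have hi : (T r c).2 = i := by
    rw [List.getD_eq_getElem?_getD, hwp] at hpi; simpa using hpi
  have hrc : (r, c) ∈ lam := lam.up_left_mem (Nat.le_succ _) le_rfl hmem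
  classical
  have hex : ∃ j, T r j = T r c := ⟨c, rfl⟩
  set c0 := Nat.find hex with hc0
  have hc0T : T r c0 = T r c := Nat.find_spec hex
  have hc0c : c0 ≤ c := Nat.find_min' hex rfl
  have hmin : ∀ j, T r j = T r c → c0 ≤ j := fun j hj => Nat.find_min' hex hj
  clear_value c0
  -- entries of the row below
  have hbel : ∀ j, j ≤ c → T r j = T r c → T (r + 1) j = ((T r c).1, i + 1) := by
    intro j hj hTj
    have a1 := hT.2.2 r (r + 1) j (lam.up_left_mem le_rfl hj hmem) (Nat.lt_succ_self _)
    have a2 := hT.2.1 (r + 1) j c hmem hj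
    rw [hTj] at a1
    unfold lexLt at a1
    unfold lexLe at a2
    ext <;> simp only <;> omega
  have hA : (r + 1, c0) ∈ lam := lam.up_left_mem le_rfl hc0c hmem
  have hpos : ∀ X : ℕ × ℕ, X ∈ lam → ∃ q, (wBoxes lam n T)[q]? = some X := fun X hX =>
    List.mem_iff_getElem?.1 ((mem_wBoxes lam n m T hT _).2 hX)
  choose! pos hpos using hpos
  have hqA := hpos _ hA
  have hAT := hbel c0 hc0c hc0T
  have hqp : pos (r + 1, c0) < p := by
    rw [wBoxes_lt_iff lam n T hqA hB]
    right
    simp [hAT]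
  generalize pos (r + 1, c0) = q at hqA hqp
  have hlt := hw q hqp.le
  rw [count_window, count_window] at hlt
  have e : q + (p + 1 - q) = p + 1 := by omega
  rw [e] at hlt
  refine absurd hlt (not_lt.2 ?_)
  -- description of the boxes in the window carrying `i`
  have key : ∀ x ∈ (Finset.Ico q (p + 1)).filter (fun x => (wWordT lam n T)[x]? = some i),
      ∃ j, (wBoxes lam n T)[x]? = some (r, j) ∧ j ≤ c ∧ c0 ≤ j ∧ T r j = T r c := by
    intro x hx
    simp only [Finset.mem_filter, Finset.mem_Ico] at hx
    obtain ⟨⟨hx1, hx2⟩, hx3⟩ := hx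
    simp only [wWordT, List.getElem?_map, Option.map_eq_some_iff] at hx3
    obtain ⟨⟨s, j⟩, hX, hXi⟩ := hx3
    have hXm : (s, j) ∈ lam := (mem_wBoxes lam n m T hT _).1 (List.mem_iff_getElem?.2 ⟨x, hX⟩)
    have b1 := wBoxes_le lam n T hqA hX hx1
    have b2 := wBoxes_le lam n T hX hB (by omega)
    simp only at hXi
    have hsr : s = r ∧ j ≤ c ∧ (T s j).1 = (T r c).1 := by
      have hs : s ≠ r + 1 ∨ j < c0 := by
        by_contra hcon
        push Not at hcon
        obtain ⟨rfl, hj⟩ := hcon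
        have a2 := hT.2.1 (r + 1) c0 j hXm hj
        rw [hAT] at a2
        rcases b1 with b1 | b1
        · simp only [Prod.mk.injEq, true_and] at b1
          subst b1
          rw [hAT] at hXi
          simp at hXi
        · rcases b2 with b2 | b2
          · simp at b2
          · unfold readLt at b1 b2
            unfold lexLe at a2
            simp only [hAT] at b1 b2 a2
            omega
      rcases b1 with b1 | b1
      · simp only [Prod.mk.injEq] at b1
        omega
      · rcases b2 with b2 | b2
        · simp only [Prod.mk.injEq] at b2
          obtain ⟨rfl, rfl⟩ := b2
          simp
        · unfold readLt at b1 b2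
          simp only [hAT] at b1 b2
          omega
    obtain ⟨rfl, hj, hT1⟩ := hsr
    have hTj : T s j = T s c := Prod.ext hT1 (by rw [hXi, hi])
    exact ⟨j, hX, hj, hmin j hTj, hTj⟩
  choose! col hcol using key
  apply Finset.card_le_card_of_injOn (fun x => pos (r + 1, col x))
  · intro x hx
    obtain ⟨k1, k2, k3, k4⟩ := hcol x hx
    have hm1 : (r + 1, col x) ∈ lam := lam.up_left_mem le_rfl k2 hmem
    have hps := hpos _ hm1
    have hTb := hbel _ k2 k4
    simp only [Finset.coe_filter, Finset.mem_Ico, Set.mem_ofPred_eq]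
    refine ⟨⟨?_, ?_⟩, ?_⟩
    · by_contra hcon
      have := (wBoxes_lt_iff lam n T hps hqA).1 (by omega)
      unfold readLt at this
      simp only [hTb, hAT] at this
      omega
    · have : pos (r + 1, col x) < p := by
        rw [wBoxes_lt_iff lam n T hps hB]
        right
        simp [hTb]
      omega
    · simp [wWordT, hps, hTb]
  · intro x hx y hy hxy
    obtain ⟨k1, k2, k3, k4⟩ := hcol x hx
    obtain ⟨l1, l2, l3, l4⟩ := hcol y hy
    have hps := hpos _ (lam.up_left_mem le_rfl k2 hmem)
    have hps' := hpos _ (lam.up_left_mem le_rfl l2 hmem)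
    simp only at hxy
    rw [hxy, hps'] at hps
    have hce : col y = col x := by simpa using hps
    rw [hce] at l1
    by_contra hne
    rcases Nat.lt_or_gt_of_ne hne with h' | h'
    · have := (wBoxes_lt_iff lam n T k1 l1).1 h'
      exact readLt_asymm T this this
    · have := (wBoxes_lt_iff lam n T l1 k1).1 h'
      exact readLt_asymm T this this

/-- lowering operators are well defined. Let `T ∈ B_λ(n,m)` and
`1 ≤ i ≤ m-1`. Suppose under the `i`-bracketing rule applied to `w(T)` some letter `i` is
unmatched, let `B` be the box of `T` corresponding to the rightmost unmatched letter `i`,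
and let `T'` be obtained from `T` by changing the entry `(k, i)` of `B` to `(k, i+1)`. Then
`T' ∈ B_λ(n,m)`, `a(T') = a(T)`, and `b(T') = b(T) − e_i + e_{i+1}`. -/
theorem stmt_4 (lam : YoungDiagram) (n m : ℕ) (hn : 1 ≤ n) (hm : 1 ≤ m)
    (T : ℕ → ℕ → ℕ × ℕ) (hT : IsBitabT lam n m T)
    (i : ℕ) (hi1 : 1 ≤ i) (hi2 : i ≤ m - 1)
    (p : ℕ) (hp : UnmatchedClose (wWordT lam n T) i p)
    (hrightmost : ∀ p', p < p' → ¬ UnmatchedClose (wWordT lam n T) i p')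
    (B : ℕ × ℕ) (hB : B = (wBoxes lam n T).getD p (0, 0))
    (T' : ℕ → ℕ → ℕ × ℕ)
    (hT' : T' = fun r c => if (r, c) = B then ((T B.1 B.2).1, i + 1) else T r c) :
    IsBitabT lam n m T' ∧
    (∀ k, aWtT lam T' k = aWtT lam T k) ∧
    (∀ j, bWtT lam T' j =
      if j = i then bWtT lam T j - 1 else if j = i + 1 then bWtT lam T j + 1
      else bWtT lam T j) := by
  have hpB : (wBoxes lam n T)[p]? = some B := by
    have hl : p < (wBoxes lam n T).length := by simpa [wWordT] using hp.1
    rw [hB, List.getD_eq_getElem?_getD, List.getElem?_eq_getElem hl]; rfl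
  clear hB
  obtain ⟨r, c⟩ := B
  have hmem : (r, c) ∈ lam := (mem_wBoxes lam n m T hT _).1 (List.mem_iff_getElem?.2 ⟨p, hpB⟩)
  have hwp : (wWordT lam n T)[p]? = some (T r c).2 := by
    simp [wWordT, hpB]
  have hi : (T r c).2 = i := by
    have hpi := hp.2.1
    rw [List.getD_eq_getElem?_getD, hwp] at hpi; simpa using hpi
  have hR := right_ne lam n m T hT i p hp hrightmost r c hpB
  have hD := below_ne lam n m T hT i p hp r c hpB
  have hTB : T' r c = ((T r c).1, i + 1) := by simp [hT']
  have hTo : ∀ s d, (s, d) ≠ (r, c) → T' s d = T s d := by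
    intro s d h
    rw [hT']
    simp only [if_neg h]
  clear hT'
  have h1 : ∀ s d, (T' s d).1 = (T s d).1 := by
    intro s d
    by_cases h : (s, d) = (r, c)
    · obtain ⟨rfl, rfl⟩ := Prod.mk.inj h
      rw [hTB]
    · rw [hTo _ _ h]
  refine ⟨⟨?_, ?_, ?_⟩, ?_, ?_⟩
  · intro s d hsd
    have := hT.1 s d hsd
    by_cases h : (s, d) = (r, c)
    · obtain ⟨rfl, rfl⟩ := Prod.mk.inj h
      rw [hTB]
      simp only
      omega
    · rw [hTo _ _ h]; exact this
  · intro s d d' hsd hdd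
    have h0 := hT.2.1 s d d' hsd hdd
    by_cases h : (s, d) = (r, c)
    · obtain ⟨rfl, rfl⟩ := Prod.mk.inj h
      by_cases h' : d' = d
      · subst h'; right; exact ⟨rfl, le_rfl⟩
      · rw [hTB, hTo _ _ (by simpa using h')]
        have hm1 : (s, d + 1) ∈ lam := lam.up_left_mem le_rfl (by omega) hsd
        have g1 := hT.2.1 s d (d + 1) hm1 (by omega)
        have g2 := hT.2.1 s (d + 1) d' hsd (by omega)
        have g3 : ¬ ((T s (d + 1)).1 = (T s d).1 ∧ (T s (d + 1)).2 = (T s d).2) :=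
          fun g => hR hm1 (Prod.ext g.1 g.2)
        unfold lexLe at *
        simp only
        omega
    · rw [hTo _ _ h]
      by_cases h' : (s, d') = (r, c)
      · obtain ⟨rfl, rfl⟩ := Prod.mk.inj h'
        rw [hTB]
        unfold lexLe at *
        simp only
        omega
      · rw [hTo _ _ h']; exact h0
  · intro s s' d hsd hss
    have h0 := hT.2.2 s s' d hsd hss
    by_cases h : (s, d) = (r, c)
    · obtain ⟨rfl, rfl⟩ := Prod.mk.inj h
      rw [hTB, hTo _ _ (by simp; omega)]
      have hm1 : (s + 1, d) ∈ lam := lam.up_left_mem (by omega) le_rfl hsd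
      have g1 := hT.2.2 s (s + 1) d hm1 (by omega)
      have g3 := hD hm1
      have g2 : s' = s + 1 ∨ lexLt (T (s + 1) d) (T s' d) := by
        rcases Nat.lt_or_ge (s + 1) s' with g | g
        · right; exact hT.2.2 _ _ d hsd g
        · left; omega
      rcases g2 with rfl | g2
      · unfold lexLt at *
        simp only
        by_cases e1 : (T (s + 1) d).1 = (T s d).1
        · have : (T (s + 1) d).2 ≠ i + 1 := g3 e1
          omega
        · omega
      · unfold lexLt at *
        simp only
        omega
    · rw [hTo _ _ h]
      by_cases h' : (s', d) = (r, c)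
      · obtain ⟨rfl, rfl⟩ := Prod.mk.inj h'
        rw [hTB]
        unfold lexLt at *
        simp only
        omega
      · rw [hTo _ _ h']; exact h0
  · intro k
    unfold aWtT
    simp only [h1]
  · intro j
    unfold bWtT
    have hcell : (r, c) ∈ lam.cells := hmem
    split_ifs with e1 e2
    · subst e1
      rw [← Finset.card_erase_of_mem (a := (r, c)) (by simp [hi, hmem])]
      congr 1
      ext ⟨s, d⟩
      simp only [Finset.mem_filter, Finset.mem_erase]
      by_cases h : (s, d) = (r, c)
      · obtain ⟨rfl, rfl⟩ := Prod.mk.inj h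
        simp [hTB]
      · simp only [hTo _ _ h, h, ne_eq, not_false_eq_true, true_and]
    · subst e2
      rw [← Finset.card_insert_of_notMem (a := (r, c)) (by simp [hi])]
      congr 1
      ext ⟨s, d⟩
      simp only [Finset.mem_filter, Finset.mem_insert]
      by_cases h : (s, d) = (r, c)
      · obtain ⟨rfl, rfl⟩ := Prod.mk.inj h
        simp [hTB, hmem]
      · simp only [hTo _ _ h, h, false_or]
    · congr 1
      ext ⟨s, d⟩
      simp only [Finset.mem_filter]
      by_cases h : (s, d) = (r, c)
      · obtain ⟨rfl, rfl⟩ := Prod.mk.inj h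
        simp only [hTB, hi]
        constructor <;> rintro ⟨_, h⟩ <;> omega
      · rw [hTo _ _ h]
end

section
/- Let λ be a partition, n, m ≥ 1 and 1 ≤ i ≤ m−1. Define the lowering operator f_i on B_λ(n,m): apply the i-bracketing rule to w(T); if some letter i is unmatched, f_i(T) is obtained by changing the entry (k,i) of the box corresponding to the rightmost unmatched i into (k,i+1); otherwise f_i(T) is undefined. Define the raising operator e_i: apply the i-bracketing rule to w(T); if some letter i+1 is unmatched, e_i(T) is obtained by changing the entry (k,i+1) of the box corresponding to the leftmost unmatched i+1 into (k,i); otherwise e_i(T) is undefined. Then f_i and e_i are mutually inverse partial maps on B_λ(n,m): if f_i(T) = T' then e_i(T') is defined and equals T, and if e_i(T) = T'' then f_i(T'') is defined and equals T. -/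
/-- `LowerRel lam n m i T T'` expresses `f_i(T) = T'`: under the `i`-bracketing rule applied to
`w(T)` some letter `i` is unmatched, and `T'` is obtained from `T` by changing the entry
`(k, i)` of the box corresponding to the rightmost unmatched letter `i` into `(k, i+1)`. -/
def LowerRel (lam : YoungDiagram) (n m i : ℕ) (T T' : ℕ → ℕ → ℕ × ℕ) : Prop :=
  ∃ p, UnmatchedClose (wWordT lam n T) i p ∧
    (∀ p', p < p' → ¬ UnmatchedClose (wWordT lam n T) i p') ∧
    T' = fun r c =>
      if (r, c) = (wBoxes lam n T).getD p (0, 0) then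
        ((T ((wBoxes lam n T).getD p (0, 0)).1 ((wBoxes lam n T).getD p (0, 0)).2).1, i + 1)
      else T r c

/-- `RaiseRel lam n m i T T'` expresses `e_i(T) = T'`: under the `i`-bracketing rule applied to
`w(T)` some letter `i+1` is unmatched, and `T'` is obtained from `T` by changing the entry
`(k, i+1)` of the box corresponding to the leftmost unmatched letter `i+1` into `(k, i)`. -/
def RaiseRel (lam : YoungDiagram) (n m i : ℕ) (T T' : ℕ → ℕ → ℕ × ℕ) : Prop :=
  ∃ p, UnmatchedOpen (wWordT lam n T) i p ∧
    (∀ p', p' < p → ¬ UnmatchedOpen (wWordT lam n T) i p') ∧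
    T' = fun r c =>
      if (r, c) = (wBoxes lam n T).getD p (0, 0) then
        ((T ((wBoxes lam n T).getD p (0, 0)).1 ((wBoxes lam n T).getD p (0, 0)).2).1, i)
      else T r c

/-- Height function of the bracketing word. -/
def hgt (w : List ℕ) (i k : ℕ) : ℤ :=
  ((w.take k).count (i + 1) : ℤ) - ((w.take k).count i : ℤ)

lemma hgt_window (w : List ℕ) (i q p : ℕ) (h : q ≤ p) :
    (((w.drop q).take (p - q)).count (i + 1) : ℤ) - (((w.drop q).take (p - q)).count i : ℤ)
      = hgt w i p - hgt w i q := by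
  have e : w.take p = w.take q ++ (w.drop q).take (p - q) := by
    rw [← List.take_add]; congr 1; omega
  unfold hgt
  rw [e, List.count_append, List.count_append]
  push_cast
  ring

lemma hgt_succ (w : List ℕ) (i k : ℕ) (h : k < w.length) :
    hgt w i (k + 1) = hgt w i k +
      (if w.getD k 0 = i + 1 then 1 else if w.getD k 0 = i then -1 else 0) := by
  unfold hgt
  rw [List.getD_eq_getElem _ _ h, List.take_succ_eq_append_getElem h,
    List.count_append, List.count_append, List.count_singleton, List.count_singleton]
  simp only [beq_iff_eq]
  split_ifs <;> push_cast <;> omega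

lemma close_iff (w : List ℕ) (i p : ℕ) : UnmatchedClose w i p ↔
    p < w.length ∧ w.getD p 0 = i ∧ ∀ q, q ≤ p → hgt w i (p + 1) < hgt w i q := by
  unfold UnmatchedClose
  refine and_congr_right fun _ => and_congr_right fun _ => forall_congr' fun q => ?_
  refine forall_congr' fun hq => ?_
  have := hgt_window w i q (p + 1) (by omega)
  omega

lemma open_iff (w : List ℕ) (i p : ℕ) : UnmatchedOpen w i p ↔
    p < w.length ∧ w.getD p 0 = i + 1 ∧
      ∀ q, p ≤ q → q < w.length → hgt w i p < hgt w i (q + 1) := by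
  unfold UnmatchedOpen
  refine and_congr_right fun _ => and_congr_right fun _ => forall_congr' fun q => ?_
  refine forall_congr' fun hq => forall_congr' fun hq' => ?_
  have := hgt_window w i p (q + 1) (by omega)
  omega

lemma getD_set_self (w : List ℕ) (p x : ℕ) (h : p < w.length) : (w.set p x).getD p 0 = x := by
  simp [List.getD_eq_getElem?_getD, h]

lemma getD_set_ne (w : List ℕ) (p x k : ℕ) (h : k ≠ p) :
    (w.set p x).getD k 0 = w.getD k 0 := by
  simp [List.getD_eq_getElem?_getD, List.getElem?_set, h.symm]

lemma hgt_set_le (w : List ℕ) (i p x k : ℕ) (h : k ≤ p) :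
    hgt (w.set p x) i k = hgt w i k := by
  unfold hgt
  rw [List.take_set_of_le h]

lemma hgt_set_gt (w : List ℕ) (i p x : ℕ) (hp : p < w.length) (k : ℕ) (h : p + 1 ≤ k)
    (hk : k ≤ w.length) :
    hgt (w.set p x) i k - hgt w i k = hgt (w.set p x) i (p + 1) - hgt w i (p + 1) := by
  induction k, h using Nat.le_induction with
  | base => rfl
  | succ k hk1 ih =>
    have h1 := hgt_succ w i k (by omega)
    have h2 := hgt_succ (w.set p x) i k (by simp; omega)
    rw [getD_set_ne _ _ _ _ (by omega)] at h2
    have := ih (by omega)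
    omega

lemma word_lower (w : List ℕ) (i p : ℕ) (h : UnmatchedClose w i p)
    (hmax : ∀ p', p < p' → ¬ UnmatchedClose w i p') :
    UnmatchedOpen (w.set p (i + 1)) i p ∧
      ∀ p', p' < p → ¬ UnmatchedOpen (w.set p (i + 1)) i p' := by
  rw [close_iff] at h
  obtain ⟨hp, hl, hh⟩ := h
  have key : ∀ d, p + 1 + d ≤ w.length → hgt w i (p + 1) ≤ hgt w i (p + 1 + d) := by
    intro d
    induction d using Nat.strong_induction_on with
    | _ d ih =>
      intro hd
      by_contra hlt
      push Not at hlt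
      rcases Nat.eq_zero_or_pos d with rfl | hpos
      · simp at hlt
      · refine hmax (p + d) (by omega) ((close_iff _ _ _).2 ?_)
        have e : p + d + 1 = p + 1 + d := by omega
        have h1 := ih (d - 1) (by omega) (by omega)
        have e2 : p + 1 + (d - 1) = p + d := by omega
        rw [e2] at h1
        have h2 := hgt_succ w i (p + d) (by omega)
        rw [e] at h2
        refine ⟨by omega, ?_, ?_⟩
        · split_ifs at h2 <;> first | assumption | omega
        · intro q hq
          rw [e]
          by_cases hqp : q ≤ p
          · have := hh q hqp; omega
          · have h3 := ih (q - (p + 1)) (by omega) (by omega)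
            have e3 : p + 1 + (q - (p + 1)) = q := by omega
            rw [e3] at h3; omega
  have s1 := hgt_succ w i p hp
  rw [hl, if_neg (by omega), if_pos rfl] at s1
  have s2 := hgt_succ (w.set p (i + 1)) i p (by simpa using hp)
  rw [getD_set_self _ _ _ hp, if_pos rfl, hgt_set_le _ _ _ _ _ le_rfl] at s2
  constructor
  · rw [open_iff]
    refine ⟨by simpa using hp, getD_set_self _ _ _ hp, ?_⟩
    intro q hq hq'
    rw [List.length_set] at hq'
    rw [hgt_set_le _ _ _ _ _ le_rfl]
    have h1 := hgt_set_gt w i p (i + 1) hp (q + 1) (by omega) (by omega)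
    have h2 := key (q - p) (by omega)
    have e : p + 1 + (q - p) = q + 1 := by omega
    rw [e] at h2
    omega
  · intro p' hp' ho
    rw [open_iff] at ho
    have h1 := ho.2.2 (p - 1) (by omega) (by rw [List.length_set]; omega)
    rw [hgt_set_le _ _ _ _ _ (by omega), hgt_set_le _ _ _ _ _ (by omega)] at h1
    have e : p - 1 + 1 = p := by omega
    rw [e] at h1
    have := hh p' (by omega)
    omega

lemma word_raise (w : List ℕ) (i p : ℕ) (h : UnmatchedOpen w i p)
    (hmin : ∀ p', p' < p → ¬ UnmatchedOpen w i p') :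
    UnmatchedClose (w.set p i) i p ∧
      ∀ p', p < p' → ¬ UnmatchedClose (w.set p i) i p' := by
  rw [open_iff] at h
  obtain ⟨hp, hl, hh⟩ := h
  have key : ∀ d, d ≤ p → hgt w i p ≤ hgt w i (p - d) := by
    intro d
    induction d using Nat.strong_induction_on with
    | _ d ih =>
      intro hd
      by_contra hlt
      push Not at hlt
      rcases Nat.eq_zero_or_pos d with rfl | hpos
      · simp at hlt
      · refine hmin (p - d) (by omega) ((open_iff _ _ _).2 ?_)
        have h1 := ih (d - 1) (by omega) (by omega)
        have e2 : p - (d - 1) = p - d + 1 := by omega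
        rw [e2] at h1
        have h2 := hgt_succ w i (p - d) (by omega)
        refine ⟨by omega, ?_, ?_⟩
        · split_ifs at h2 <;> first | assumption | omega
        · intro q hq hq'
          by_cases hqp : p ≤ q
          · have := hh q hqp hq'; omega
          · have h3 := ih (p - (q + 1)) (by omega) (by omega)
            have e3 : p - (p - (q + 1)) = q + 1 := by omega
            rw [e3] at h3; omega
  have s1 := hgt_succ w i p hp
  rw [hl, if_pos rfl] at s1
  have s2 := hgt_succ (w.set p i) i p (by simpa using hp)
  rw [getD_set_self _ _ _ hp, if_neg (by omega), if_pos rfl, hgt_set_le _ _ _ _ _ le_rfl] at s2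
  constructor
  · rw [close_iff]
    refine ⟨by simpa using hp, getD_set_self _ _ _ hp, ?_⟩
    intro q hq
    rw [hgt_set_le _ _ _ _ q hq]
    have h2 := key (p - q) (by omega)
    have e : p - (p - q) = q := by omega
    rw [e] at h2
    omega
  · intro p' hp' ho
    rw [close_iff, List.length_set] at ho
    have h1 := ho.2.2 (p + 1) (by omega)
    have h2 := hgt_set_gt w i p i hp (p' + 1) (by omega) (by omega)
    have := hh p' (by omega) ho.1
    omega

lemma wBoxes_congr (lam : YoungDiagram) (n : ℕ) (T T' : ℕ → ℕ → ℕ × ℕ)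
    (h : ∀ r c, (T' r c).1 = (T r c).1) : wBoxes lam n T' = wBoxes lam n T := by
  simp only [wBoxes, h]

lemma wBoxes_nodup (lam : YoungDiagram) (n : ℕ) (T : ℕ → ℕ → ℕ × ℕ) :
    (wBoxes lam n T).Nodup := by
  unfold wBoxes
  rw [List.nodup_flatMap]
  constructor
  · intro k _
    rw [List.nodup_flatMap]
    constructor
    · intro r _
      exact (List.nodup_range.filter _).map (fun a b hab => (Prod.mk.inj hab).2)
    · refine (List.nodup_reverse.2 List.nodup_range).imp ?_
      intro a b hab x hx hy
      simp only [List.mem_map] at hx hy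
      obtain ⟨c, _, rfl⟩ := hx
      obtain ⟨d, _, hd⟩ := hy
      exact hab (Prod.mk.inj hd).1.symm
  · refine List.nodup_range.imp ?_
    intro a b hab x hx hy
    simp only [List.mem_flatMap, List.mem_map, List.mem_filter, decide_eq_true_eq] at hx hy
    obtain ⟨r, _, c, ⟨_, hc⟩, rfl⟩ := hx
    obtain ⟨r', _, c', ⟨_, hc'⟩, hd⟩ := hy
    obtain ⟨rfl, rfl⟩ := Prod.mk.inj hd
    omega

/-- Replacing the second coordinate in one box. -/
def chg (T : ℕ → ℕ → ℕ × ℕ) (b : ℕ × ℕ) (x : ℕ) : ℕ → ℕ → ℕ × ℕ :=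
  fun r c => if (r, c) = b then ((T b.1 b.2).1, x) else T r c

lemma chg_fst (T : ℕ → ℕ → ℕ × ℕ) (b : ℕ × ℕ) (x r c : ℕ) :
    (chg T b x r c).1 = (T r c).1 := by
  unfold chg
  split_ifs with h
  · subst h; rfl
  · rfl

lemma chg_chg (T : ℕ → ℕ → ℕ × ℕ) (b : ℕ × ℕ) (x y : ℕ) (h : (T b.1 b.2).2 = y) :
    T = chg (chg T b x) b y := by
  funext r c
  by_cases hb : (r, c) = b
  · subst hb; simp [chg, ← h]
  · simp [chg, hb]

lemma wWordT_chg (lam : YoungDiagram) (n : ℕ) (T : ℕ → ℕ → ℕ × ℕ) (p x : ℕ)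
    (hp : p < (wBoxes lam n T).length) :
    wWordT lam n (chg T ((wBoxes lam n T).getD p (0, 0)) x) = (wWordT lam n T).set p x := by
  unfold wWordT
  rw [wBoxes_congr lam n T _ (chg_fst T _ x)]
  have hn := wBoxes_nodup lam n T
  generalize wBoxes lam n T = l at *
  rw [List.getD_eq_getElem _ _ hp]
  apply List.ext_getElem
  · simp
  · intro k h1 h2
    simp only [List.length_map] at h1
    rw [List.getElem_set]
    simp only [List.getElem_map, chg, Prod.mk.eta]
    by_cases hk : p = k
    · subst hk; simp
    · have : l[k] ≠ l[p] := fun e => hk ((hn.getElem_inj_iff).1 e).symm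
      simp [hk, this]

lemma wWordT_getD (lam : YoungDiagram) (n : ℕ) (T : ℕ → ℕ → ℕ × ℕ) (p : ℕ)
    (hp : p < (wBoxes lam n T).length) :
    (wWordT lam n T).getD p 0 = (T ((wBoxes lam n T).getD p (0, 0)).1
      ((wBoxes lam n T).getD p (0, 0)).2).2 := by
  unfold wWordT
  rw [List.getD_eq_getElem _ _ hp, List.getD_eq_getElem _ _ (by simpa using hp)]
  simp

/-- The lowering operator `f_i` and raising operator `e_i` are mutually
inverse partial maps on `B_λ(n,m)`: if `f_i(T) = T'` then `e_i(T')` is defined and equals `T`,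
and if `e_i(T) = T''` then `f_i(T'')` is defined and equals `T`. -/
theorem stmt_6 (lam : YoungDiagram) (n m : ℕ) (hn : 1 ≤ n) (hm : 1 ≤ m)
    (i : ℕ) (hi1 : 1 ≤ i) (hi2 : i ≤ m - 1) :
    (∀ T T' : ℕ → ℕ → ℕ × ℕ, IsBitabT lam n m T →
      LowerRel lam n m i T T' → RaiseRel lam n m i T' T) ∧
    (∀ T T'' : ℕ → ℕ → ℕ × ℕ, IsBitabT lam n m T →
      RaiseRel lam n m i T T'' → LowerRel lam n m i T'' T) := by
  have hlen : ∀ T, (wWordT lam n T).length = (wBoxes lam n T).length := by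
    intro T; simp [wWordT]
  constructor
  · rintro T T' - ⟨p, hc, hmax, hT'⟩
    have hp : p < (wBoxes lam n T).length := hlen T ▸ hc.1
    change T' = chg T ((wBoxes lam n T).getD p (0, 0)) (i + 1) at hT'
    have hb : wBoxes lam n T' = wBoxes lam n T := by
      rw [hT']; exact wBoxes_congr lam n T _ (chg_fst T _ _)
    have hw : wWordT lam n T' = (wWordT lam n T).set p (i + 1) := by
      rw [hT']; exact wWordT_chg lam n T p _ hp
    obtain ⟨h1, h2⟩ := word_lower _ _ _ hc hmax
    refine ⟨p, hw ▸ h1, hw ▸ h2, ?_⟩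
    change T = chg T' ((wBoxes lam n T').getD p (0, 0)) i
    rw [hb, hT']
    exact chg_chg _ _ _ _ ((wWordT_getD lam n T p hp).symm.trans hc.2.1)
  · rintro T T' - ⟨p, hc, hmax, hT'⟩
    have hp : p < (wBoxes lam n T).length := hlen T ▸ hc.1
    change T' = chg T ((wBoxes lam n T).getD p (0, 0)) i at hT'
    have hb : wBoxes lam n T' = wBoxes lam n T := by
      rw [hT']; exact wBoxes_congr lam n T _ (chg_fst T _ _)
    have hw : wWordT lam n T' = (wWordT lam n T).set p i := by
      rw [hT']; exact wWordT_chg lam n T p _ hp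
    obtain ⟨h1, h2⟩ := word_raise _ _ _ hc hmax
    refine ⟨p, hw ▸ h1, hw ▸ h2, ?_⟩
    change T = chg T' ((wBoxes lam n T').getD p (0, 0)) (i + 1)
    rw [hb, hT']
    exact chg_chg _ _ _ _ ((wWordT_getD lam n T p hp).symm.trans hc.2.1)
end

section
/- Let T ∈ B_{(r)}(n,m) be a one-row lexicographic bitableau, and let (P,Q) = RSK(T). For 1 ≤ i ≤ m−1, define the bottom lowering operator F_i^b(T): apply the i-bracketing rule to w(T); if some letter i is unmatched, change the second coordinate of the box corresponding to the rightmost unmatched i from i to i+1 and re-sort the multiset of pairs into lexicographically weakly increasing order; otherwise F_i^b(T) is undefined. For 1 ≤ j ≤ n−1, define the top lowering operator F_j^t(T) analogously using the j-bracketing of u(T) and changing the first coordinate of the selected box from j to j+1, then re-sorting lexicographically. Let f_i denote the standard tableau lowering operator on semistandard Young tableaux (apply the i-bracketing rule to the row reading word, read rows bottom to top and left to right within rows, and change the rightmost unmatched i to i+1). Then: F_i^b(T) is defined if and only if f_i(P) is defined, and in that case F_i^b(T) ∈ B_{(r)}(n,m) and RSK(F_i^b(T)) = (f_i(P), Q);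 similarly F_j^t(T) is defined if and only if f_j(Q) is defined, and in that case F_j^t(T) ∈ B_{(r)}(n,m) and RSK(F_j^t(T)) = (P, f_j(Q)). (Thus RSK is an isomorphism of gl_n×gl_m-crystals on one-row bitableaux.) -/
instance : DecidableRel lexLe := fun p q =>
  inferInstanceAs (Decidable (p.1 < q.1 ∨ (p.1 = q.1 ∧ p.2 ≤ q.2)))

instance : DecidableRel lexLt := fun p q =>
  inferInstanceAs (Decidable (p.1 < q.1 ∨ (p.1 = q.1 ∧ p.2 < q.2)))

/-- Row-insert the value `v` into the tableau `P` (a list of rows): `v` is appended at the end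
of the first row if it is at least as large as every entry there; otherwise it replaces the
leftmost entry strictly larger than `v`, which is then inserted into the next row. -/
def insRow (v : ℕ) : List (List ℕ) → List (List ℕ)
  | [] => [[v]]
  | r :: rest =>
    match r.findIdx? (fun x => decide (v < x)) with
    | none => (r ++ [v]) :: rest
    | some idx => (r.set idx v) :: insRow (r.getD idx 0) rest

/-- The insertion tableau `P(w)` of a word: successively row-insert the letters of `w`,
starting from the empty tableau. -/
def Pword (w : List ℕ) : List (List ℕ) :=
  w.foldl (fun t v => insRow v t) []

/-- The index of the row in which `p'` (the result of a row insertion into `p`) has one more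
box than `p`. -/
def growIdx (p p' : List (List ℕ)) : ℕ :=
  (List.range p'.length).findIdx fun r => decide ((p.getD r []).length ≠ (p'.getD r []).length)

/-- Append the value `a` at the end of row `r` of the tableau `q`. -/
def addBox (q : List (List ℕ)) (r a : ℕ) : List (List ℕ) :=
  if r < q.length then q.set r (q.getD r [] ++ [a]) else q ++ [[a]]

/-- The RSK correspondence applied to a biword, given as a list of (top, bottom) pairs:
the bottom entries are row-inserted in order to form the insertion tableau `P`, and the top
entries are recorded in the newly created boxes to form the recording tableau `Q`. -/
def rsk (w : List (ℕ × ℕ)) : List (List ℕ) × List (List ℕ) :=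
  w.foldl (fun PQ ab =>
    let P' := insRow ab.2 PQ.1
    (P', addBox PQ.2 (growIdx PQ.1 P') ab.1)) ([], [])

/-- A word is Yamanouchi if for every `i ≥ 1`, every suffix contains at least as many letters
`i` as letters `i+1`. -/
def Yamanouchi (w : List ℕ) : Prop :=
  ∀ i : ℕ, 1 ≤ i → ∀ s ∈ w.tails, s.count (i + 1) ≤ s.count i

/-- A one-row lexicographic bitableau in `B_{(r)}(n,m)`, encoded as its list of entries read
left to right: pairs in `{1,…,n} × {1,…,m}`, weakly increasing in lexicographic order. -/
def IsRowBitab (n m r : ℕ) (L : List (ℕ × ℕ)) : Prop :=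
  L.length = r ∧ (∀ p ∈ L, (1 ≤ p.1 ∧ p.1 ≤ n) ∧ (1 ≤ p.2 ∧ p.2 ≤ m)) ∧ L.Chain' lexLe

/-- The sort-by-top reading word `w(T)` of a one-row bitableau: for `k = 1, …, n` in increasing
order, the second coordinates of the boxes with first coordinate `k`, read left to right. -/
def wRow (n : ℕ) (L : List (ℕ × ℕ)) : List ℕ :=
  (List.range n).flatMap fun k => (L.filter fun p => decide (p.1 = k + 1)).map Prod.snd

/-- The reading word `u(T)` of a one-row bitableau: for `k = 1, …, m` in increasing order,
the first coordinates of the boxes with second coordinate `k`, read left to right. -/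
def uRow (m : ℕ) (L : List (ℕ × ℕ)) : List ℕ :=
  (List.range m).flatMap fun k => (L.filter fun p => decide (p.2 = k + 1)).map Prod.fst

/-- Under the `i`-bracketing rule (letter `i` becomes `)`, letter `i+1` becomes `(`, others
ignored), the letter at position `p` of `w` is an unmatched `)` (letter `i`); equivalently,
every window of `w` ending at `p` contains strictly more letters `i` than letters `i+1`. -/
def unmatchedClose (w : List ℕ) (i p : ℕ) : Bool :=
  decide (p < w.length) && decide (w.getD p 0 = i) &&
    (List.range (p + 1)).all fun q =>
      decide (((w.drop q).take (p + 1 - q)).count (i + 1) < ((w.drop q).take (p + 1 - q)).count i)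

/-- The position of the rightmost unmatched letter `i` of `w` under the `i`-bracketing rule,
if there is one. -/
def rightUnmatched (w : List ℕ) (i : ℕ) : Option ℕ :=
  (List.range w.length).reverse.find? (unmatchedClose w i)

/-- Sort a list of pairs into lexicographically weakly increasing order. -/
def sortLex (L : List (ℕ × ℕ)) : List (ℕ × ℕ) := L.insertionSort lexLe

/-- The row reading word of a tableau (a list of rows): rows are read bottom to top, left to
right within each row. -/
def rowWord (P : List (List ℕ)) : List ℕ := P.reverse.flatMap id

/-- The boxes `(row, column)` of a tableau in row reading order (bottom to top, left to right
within each row). -/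
def rowWordBoxes (P : List (List ℕ)) : List (ℕ × ℕ) :=
  (List.range P.length).reverse.flatMap fun r =>
    (List.range (P.getD r []).length).map fun c => (r, c)

/-- The standard lowering operator `f_i` on semistandard Young tableaux: apply the
`i`-bracketing rule to the row reading word; if some letter `i` is unmatched, change the
rightmost unmatched `i` into `i+1` (in its box); otherwise undefined. -/
def fLower (i : ℕ) (P : List (List ℕ)) : Option (List (List ℕ)) :=
  match rightUnmatched (rowWord P) i with
  | none => none
  | some p =>
    let rc := (rowWordBoxes P).getD p (0, 0)
    some (P.set rc.1 ((P.getD rc.1 []).set rc.2 (i + 1)))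

/-- Positions (indices into `L`) of the boxes of a one-row bitableau in the reading order
of `w(T)`. -/
def wRowIdx (n : ℕ) (L : List (ℕ × ℕ)) : List ℕ :=
  (List.range n).flatMap fun k =>
    (List.range L.length).filter fun t => decide ((L.getD t (0, 0)).1 = k + 1)

/-- Positions (indices into `L`) of the boxes of a one-row bitableau in the reading order
of `u(T)`. -/
def uRowIdx (m : ℕ) (L : List (ℕ × ℕ)) : List ℕ :=
  (List.range m).flatMap fun k =>
    (List.range L.length).filter fun t => decide ((L.getD t (0, 0)).2 = k + 1)

/-- The bottom lowering operator `F_i^b` on one-row bitableaux: apply the `i`-bracketing rule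
to `w(T)`; if some letter `i` is unmatched, change the second coordinate of the box
corresponding to the rightmost unmatched `i` from `i` to `i+1` and re-sort the entries into
lexicographically weakly increasing order; otherwise undefined. -/
def Fbot (n i : ℕ) (L : List (ℕ × ℕ)) : Option (List (ℕ × ℕ)) :=
  match rightUnmatched (wRow n L) i with
  | none => none
  | some p =>
    let t := (wRowIdx n L).getD p 0
    some (sortLex (L.set t ((L.getD t (0, 0)).1, i + 1)))

/-- The top lowering operator `F_j^t` on one-row bitableaux: apply the `j`-bracketing rule
to `u(T)`; if some letter `j` is unmatched, change the first coordinate of the box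
corresponding to the rightmost unmatched `j` from `j` to `j+1` and re-sort the entries into
lexicographically weakly increasing order; otherwise undefined. -/
def Ftop (m j : ℕ) (L : List (ℕ × ℕ)) : Option (List (ℕ × ℕ)) :=
  match rightUnmatched (uRow m L) j with
  | none => none
  | some p =>
    let t := (uRowIdx m L).getD p 0
    some (sortLex (L.set t (j + 1, (L.getD t (0, 0)).2)))


/-! ### One-row insertion and the row-by-row description of RSK -/

/-- Insert `b` in one row: the bumped entry (if any) and the new row. -/
def insR (b : ℕ) : List ℕ → Option ℕ × List ℕ
  | [] => (none, [b])
  | x :: r => if b < x then (some x, b :: r) else ((insR b r).1, x :: (insR b r).2)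

theorem insR_of_all_le (b : ℕ) (R : List ℕ) (h : ∀ x ∈ R, x ≤ b) : insR b R = (none, R ++ [b]) := by
  induction R with
  | nil => rfl
  | cons x R ih =>
    have h1 : ¬ b < x := by have := h x (by simp); omega
    simp [insR, h1, ih (fun y hy => h y (by simp [hy]))]

theorem insR_of_split (b y : ℕ) (U V : List ℕ) (h : ∀ x ∈ U, x ≤ b) (hy : b < y) :
    insR b (U ++ y :: V) = (some y, U ++ b :: V) := by
  induction U with
  | nil => simp [insR, hy]
  | cons x R ih =>
    have h1 : ¬ b < x := by have := h x (by simp); omega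
    simp [insR, h1, ih (fun y hy => h y (by simp [hy]))]

theorem insR_cases (b : ℕ) (R : List ℕ) :
    (insR b R = (none, R ++ [b]) ∧ ∀ x ∈ R, x ≤ b) ∨
    ∃ U y V, R = U ++ y :: V ∧ (∀ x ∈ U, x ≤ b) ∧ b < y ∧ insR b R = (some y, U ++ b :: V) := by
  induction R with
  | nil => left; simp [insR]
  | cons x R ih =>
    by_cases h : b < x
    · right; exact ⟨[], x, R, by simp, by simp, h, by simp [insR, h]⟩
    · rcases ih with ⟨h1, h2⟩ | ⟨U, y, V, h1, h2, h3, h4⟩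
      · left
        refine ⟨by simp [insR, h, h1], ?_⟩
        intro z hz
        rcases List.mem_cons.1 hz with rfl | hz
        · omega
        · exact h2 z hz
      · right
        refine ⟨x :: U, y, V, by simp [h1], ?_, h3, by simp [insR, h, h4]⟩
        intro z hz
        rcases List.mem_cons.1 hz with rfl | hz
        · omega
        · exact h2 z hz

theorem insRow_cons_none (v : ℕ) (r : List ℕ) (rest : List (List ℕ)) (h : ∀ x ∈ r, x ≤ v) :
    insRow v (r :: rest) = (r ++ [v]) :: rest := by
  have : r.findIdx? (fun x => decide (v < x)) = none := by
    rw [List.findIdx?_eq_none_iff]; intro x hx; have := h x hx; simp; omega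
  simp [insRow, this]

theorem insRow_cons_some (v y : ℕ) (U V : List ℕ) (rest : List (List ℕ)) (h : ∀ x ∈ U, x ≤ v)
    (hy : v < y) :
    insRow v ((U ++ y :: V) :: rest) = (U ++ v :: V) :: insRow y rest := by
  have : (U ++ y :: V).findIdx? (fun x => decide (v < x)) = some U.length := by
    induction U with
    | nil => simp [List.findIdx?_cons, hy]
    | cons x U ih =>
      have h1 : ¬ v < x := by have := h x (by simp); omega
      simp only [List.cons_append, List.findIdx?_cons]
      rw [ih (fun z hz => h z (by simp [hz]))]
      simp [h1]
  simp [insRow, this]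

/-- One step of passing a biword through a row. -/
def stepRow (st : List ℕ × List ℕ × List (ℕ × ℕ)) (ab : ℕ × ℕ) :
    List ℕ × List ℕ × List (ℕ × ℕ) :=
  match insR ab.2 st.1 with
  | (none, R') => (R', st.2.1 ++ [ab.1], st.2.2)
  | (some y, R') => (R', st.2.1, st.2.2 ++ [(ab.1, y)])

/-- Pass a biword through an empty row: the final row, the tops of appended letters, and
the biword of bumped letters. -/
def rpass (L : List (ℕ × ℕ)) : List ℕ × List ℕ × List (ℕ × ℕ) :=
  L.foldl stepRow ([], [], [])

theorem pass_snoc (L : List (ℕ × ℕ)) (ab : ℕ × ℕ) : rpass (L ++ [ab]) = stepRow (rpass L) ab := by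
  simp [rpass]

theorem pass_snoc_cases (L : List (ℕ × ℕ)) (a b : ℕ) :
    (rpass (L ++ [(a, b)]) = ((rpass L).1 ++ [b], (rpass L).2.1 ++ [a], (rpass L).2.2) ∧
      insR b (rpass L).1 = (none, (rpass L).1 ++ [b]) ∧ ∀ x ∈ (rpass L).1, x ≤ b) ∨
    ∃ U y V, (rpass L).1 = U ++ y :: V ∧ (∀ x ∈ U, x ≤ b) ∧ b < y ∧
      insR b (rpass L).1 = (some y, U ++ b :: V) ∧
      rpass (L ++ [(a, b)]) = (U ++ b :: V, (rpass L).2.1, (rpass L).2.2 ++ [(a, y)]) := by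
  rw [pass_snoc]
  rcases insR_cases b (rpass L).1 with ⟨h1, h2⟩ | ⟨U, y, V, h1, h2, h3, h4⟩
  · left; simp [stepRow, h1]; exact h2
  · right; exact ⟨U, y, V, h1, h2, h3, h4, by simp [stepRow, h4]⟩

theorem growIdx_zero (R R' : List ℕ) (P P' : List (List ℕ)) (h : R.length ≠ R'.length) :
    growIdx (R :: P) (R' :: P') = 0 := by
  simp [growIdx, List.range_succ_eq_map, List.findIdx_cons, h]

theorem growIdx_succ (R R' : List ℕ) (P P' : List (List ℕ)) (h : R.length = R'.length) :
    growIdx (R :: P) (R' :: P') = growIdx P P' + 1 := by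
  simp only [growIdx, List.length_cons, List.range_succ_eq_map, List.findIdx_cons]
  simp [h, List.findIdx_map, Function.comp_def]

theorem addBox_succ (S : List ℕ) (Q : List (List ℕ)) (k a : ℕ) :
    addBox (S :: Q) (k + 1) a = S :: addBox Q k a := by
  unfold addBox
  by_cases h : k < Q.length <;> simp [h]

theorem rsk_snoc (L : List (ℕ × ℕ)) (ab : ℕ × ℕ) :
    rsk (L ++ [ab]) = (insRow ab.2 (rsk L).1,
      addBox (rsk L).2 (growIdx (rsk L).1 (insRow ab.2 (rsk L).1)) ab.1) := by
  simp [rsk]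

theorem rsk_rows (L : List (ℕ × ℕ)) (hL : L ≠ []) :
    rsk L = ((rpass L).1 :: (rsk (rpass L).2.2).1, (rpass L).2.1 :: (rsk (rpass L).2.2).2) := by
  induction L using List.reverseRecOn with
  | nil => exact absurd rfl hL
  | append_singleton L ab ih =>
    obtain ⟨a, b⟩ := ab
    by_cases h0 : L = []
    · subst h0
      simp [rsk, rpass, stepRow, insR, insRow, growIdx, addBox]
    · have ih := ih h0
      rw [rsk_snoc, ih]
      rcases pass_snoc_cases L a b with ⟨h1, h2, h3⟩ | ⟨U, y, V, h1, h2, h3, h4, h5⟩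
      · rw [h1]
        simp only [insRow_cons_none _ _ _ h3]
        rw [growIdx_zero _ _ _ _ (by simp)]
        simp [addBox]
      · rw [h5, h1]
        simp only [insRow_cons_some _ _ _ _ _ h2 h3]
        rw [growIdx_succ _ _ _ _ (by simp), addBox_succ, rsk_snoc]

theorem pass_length (L : List (ℕ × ℕ)) :
    (rpass L).1.length = (rpass L).2.1.length ∧
    (rpass L).1.length + (rpass L).2.2.length = L.length := by
  induction L using List.reverseRecOn with
  | nil => simp [rpass]
  | append_singleton L ab ih =>
    obtain ⟨a, b⟩ := ab
    rcases pass_snoc_cases L a b with ⟨h1, h2, h3⟩ | ⟨U, y, V, h1, h2, h3, h4, h5⟩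
    · rw [h1]; simp; omega
    · rw [h5]; rw [h1] at ih; simp at ih ⊢; omega

theorem pass_fst_pos (L : List (ℕ × ℕ)) (hL : L ≠ []) : (rpass L).1 ≠ [] := by
  induction L using List.reverseRecOn with
  | nil => exact absurd rfl hL
  | append_singleton L ab ih =>
    obtain ⟨a, b⟩ := ab
    rcases pass_snoc_cases L a b with ⟨h1, h2, h3⟩ | ⟨U, y, V, h1, h2, h3, h4, h5⟩
    · rw [h1]; simp
    · rw [h5]; simp

theorem pass_out_lt (L : List (ℕ × ℕ)) (hL : L ≠ []) : (rpass L).2.2.length < L.length := by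
  have h1 := pass_length L
  have h2 := List.length_pos_of_ne_nil (pass_fst_pos L hL)
  omega

theorem sorted_split_ins (U V : List ℕ) (y b : ℕ) (h : (U ++ y :: V).Pairwise (· ≤ ·))
    (hU : ∀ x ∈ U, x ≤ b) (hy : b < y) : (U ++ b :: V).Pairwise (· ≤ ·) := by
  simp only [List.pairwise_append, List.pairwise_cons, List.mem_cons] at h ⊢
  obtain ⟨h1, ⟨h2, h3⟩, h4⟩ := h
  refine ⟨h1, ⟨fun z hz => by have := h2 z hz; omega, h3⟩, ?_⟩
  intro x hx z hz
  rcases hz with rfl | hz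
  · exact hU x hx
  · exact h4 x hx z (Or.inr hz)

theorem sorted_snoc (R : List ℕ) (b : ℕ) (h : R.Pairwise (· ≤ ·)) (hb : ∀ x ∈ R, x ≤ b) :
    (R ++ [b]).Pairwise (· ≤ ·) := by
  simp only [List.pairwise_append]
  exact ⟨h, by simp, by simpa using hb⟩

theorem pass_sorted (L : List (ℕ × ℕ)) : (rpass L).1.Pairwise (· ≤ ·) := by
  induction L using List.reverseRecOn with
  | nil => simp [rpass]
  | append_singleton L ab ih =>
    obtain ⟨a, b⟩ := ab
    rcases pass_snoc_cases L a b with ⟨h1, h2, h3⟩ | ⟨U, y, V, h1, h2, h3, h4, h5⟩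
    · rw [h1]; exact sorted_snoc _ _ ih h3
    · rw [h5]; rw [h1] at ih; exact sorted_split_ins _ _ _ _ ih h2 h3

/-! ### Lexicographic order and sorting -/

theorem lexLe_refl (p : ℕ × ℕ) : lexLe p p := Or.inr ⟨rfl, le_rfl⟩

theorem lexLe_trans {p q r : ℕ × ℕ} (h : lexLe p q) (h' : lexLe q r) : lexLe p r := by
  unfold lexLe at *; omega

theorem lexLe_total (p q : ℕ × ℕ) : lexLe p q ∨ lexLe q p := by
  unfold lexLe; omega

theorem lexLe_antisymm {p q : ℕ × ℕ} (h : lexLe p q) (h' : lexLe q p) : p = q := by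
  unfold lexLe at *; ext <;> omega

instance : Std.Total lexLe := ⟨lexLe_total⟩
instance : IsTrans (ℕ × ℕ) lexLe := ⟨fun _ _ _ => lexLe_trans⟩

theorem lex_eq_of_perm {l l' : List (ℕ × ℕ)} (h : l.Perm l') (h1 : l.Pairwise lexLe)
    (h2 : l'.Pairwise lexLe) : l = l' :=
  h.eq_of_pairwise (fun _ _ _ _ => lexLe_antisymm) h1 h2

theorem sortLex_perm (l : List (ℕ × ℕ)) : (sortLex l).Perm l := List.perm_insertionSort _ _

theorem sortLex_sorted (l : List (ℕ × ℕ)) : (sortLex l).Pairwise lexLe :=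
  List.pairwise_insertionSort _ _

theorem sortLex_eq {l l' : List (ℕ × ℕ)} (h : l.Perm l') (h2 : l'.Pairwise lexLe) :
    sortLex l = l' :=
  lex_eq_of_perm ((sortLex_perm l).trans h) (sortLex_sorted l) h2

/-- The inverse biword. -/
def sw (L : List (ℕ × ℕ)) : List (ℕ × ℕ) := sortLex (L.map Prod.swap)

theorem sw_perm (L : List (ℕ × ℕ)) : (sw L).Perm (L.map Prod.swap) := sortLex_perm _

theorem sw_sorted (L : List (ℕ × ℕ)) : (sw L).Pairwise lexLe := sortLex_sorted _

theorem mem_sw (L : List (ℕ × ℕ)) (x y : ℕ) : (x, y) ∈ sw L ↔ (y, x) ∈ L := by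
  rw [(sw_perm L).mem_iff]; simp

theorem sw_sw (L : List (ℕ × ℕ)) (h : L.Pairwise lexLe) : sw (sw L) = L := by
  apply sortLex_eq _ h
  have := (sw_perm L).map Prod.swap
  simpa using this

theorem pass_out_tops (L : List (ℕ × ℕ)) : ∀ o ∈ (rpass L).2.2, ∃ p ∈ L, p.1 = o.1 := by
  induction L using List.reverseRecOn with
  | nil => simp [rpass]
  | append_singleton L ab ih =>
    obtain ⟨a, b⟩ := ab
    rcases pass_snoc_cases L a b with ⟨h1, h2, h3⟩ | ⟨U, y, V, h1, h2, h3, h4, h5⟩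
    · rw [h1]; intro o ho
      obtain ⟨p, hp, hp'⟩ := ih o ho
      exact ⟨p, by simp [hp], hp'⟩
    · rw [h5]; intro o ho
      rcases List.mem_append.1 ho with ho | ho
      · obtain ⟨p, hp, hp'⟩ := ih o ho
        exact ⟨p, by simp [hp], hp'⟩
      · simp at ho; subst ho; exact ⟨(a, b), by simp, rfl⟩

theorem pass_out_sorted_aux (L : List (ℕ × ℕ)) (hL : L.Pairwise lexLe) :
    (rpass L).2.2.Pairwise lexLe ∧
    ∀ a b, (∀ p ∈ L, lexLe p (a, b)) → ∀ o ∈ (rpass L).2.2, ∀ y ∈ (rpass L).1, b < y →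
      lexLe o (a, y) := by
  induction L using List.reverseRecOn with
  | nil => simp [rpass]
  | append_singleton L ab ih =>
    obtain ⟨a, b⟩ := ab
    rw [List.pairwise_append] at hL
    obtain ⟨hL1, -, hL2⟩ := hL
    have hL2 : ∀ p ∈ L, lexLe p (a, b) := fun p hp => hL2 p hp _ (by simp)
    obtain ⟨ih1, ih2⟩ := ih hL1
    have hs := pass_sorted L
    have htop : ∀ o ∈ (rpass L).2.2, o.1 ≤ a := by
      intro o ho
      obtain ⟨p, hp, hp'⟩ := pass_out_tops L o ho
      have := hL2 p hp
      unfold lexLe at this; simp at this; omega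
    rcases pass_snoc_cases L a b with ⟨h1, h2, h3⟩ | ⟨U, y, V, h1, h2, h3, h4, h5⟩
    · rw [h1]
      refine ⟨ih1, ?_⟩
      intro a' b' hab o ho z hz hbz
      have hlast : lexLe (a, b) (a', b') := hab _ (by simp)
      rcases List.mem_append.1 hz with hz | hz
      · exact ih2 a' b' (fun p hp => hab p (by simp [hp])) o ho z hz hbz
      · simp at hz; subst hz
        have := htop o ho
        unfold lexLe at hlast ⊢; simp at hlast ⊢; omega
    · rw [h5]
      refine ⟨?_, ?_⟩
      · rw [List.pairwise_append]
        refine ⟨ih1, by simp, ?_⟩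
        intro o ho q hq
        simp at hq; subst hq
        exact ih2 a b hL2 o ho y (by simp [h1]) h3
      · intro a' b' hab o ho z hz hbz
        have hlast : lexLe (a, b) (a', b') := hab _ (by simp)
        have hzz : z = b ∨ (z ∈ (rpass L).1 ∧ (z ∈ U ∨ z ∈ V)) := by
          rw [h1]; simp at hz ⊢; tauto
        rcases List.mem_append.1 ho with ho | ho
        · rcases hzz with hzb | ⟨hz, -⟩
          · have := htop o ho
            unfold lexLe at hlast ⊢; simp at hlast ⊢; omega
          · exact ih2 a' b' (fun p hp => hab p (by simp [hp])) o ho z hz hbz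
        · simp at ho; subst ho
          have hy : z = b ∨ z ≤ b ∨ y ≤ z := by
            rcases hzz with rfl | ⟨-, hz | hz⟩
            · simp
            · right; left; exact h2 z hz
            · right; right
              rw [h1] at hs
              simp only [List.pairwise_append, List.pairwise_cons] at hs
              exact hs.2.1.1 z hz
          unfold lexLe at hlast ⊢; simp at hlast ⊢; omega

theorem pass_out_sorted (L : List (ℕ × ℕ)) (hL : L.Pairwise lexLe) :
    (rpass L).2.2.Pairwise lexLe := (pass_out_sorted_aux L hL).1

/-! ### Symmetry of RSK -/

theorem pass_tops_le (L : List (ℕ × ℕ)) (b : ℕ) (h : ∀ p ∈ L, p.1 ≤ b) :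
    ∀ x ∈ (rpass L).2.1, x ≤ b := by
  induction L using List.reverseRecOn with
  | nil => simp [rpass]
  | append_singleton L ab ih =>
    obtain ⟨a, c⟩ := ab
    have ih := ih (fun p hp => h p (by simp [hp]))
    have ha : a ≤ b := h (a, c) (by simp)
    rcases pass_snoc_cases L a c with ⟨h1, h2, h3⟩ | ⟨U, y, V, h1, h2, h3, h4, h5⟩
    · rw [h1]; intro x hx
      rcases List.mem_append.1 hx with hx | hx
      · exact ih x hx
      · simp at hx; omega
    · rw [h5]; exact ih

theorem pass_row_le (L : List (ℕ × ℕ)) (a : ℕ) (h : ∀ p ∈ L, p.2 ≤ a) :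
    ∀ x ∈ (rpass L).1, x ≤ a := by
  induction L using List.reverseRecOn with
  | nil => simp [rpass]
  | append_singleton L ab ih =>
    obtain ⟨c, b⟩ := ab
    have ih := ih (fun p hp => h p (by simp [hp]))
    have ha : b ≤ a := h (c, b) (by simp)
    rcases pass_snoc_cases L c b with ⟨h1, h2, h3⟩ | ⟨U, y, V, h1, h2, h3, h4, h5⟩
    · rw [h1]; intro x hx
      rcases List.mem_append.1 hx with hx | hx
      · exact ih x hx
      · simp at hx; omega
    · rw [h5]; rw [h1] at ih; intro x hx
      simp at hx ih
      rcases hx with hx | rfl | hx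
      · exact ih x (Or.inl hx)
      · exact ha
      · exact ih x (Or.inr (Or.inr hx))

theorem stepRow_none (R S : List ℕ) (O : List (ℕ × ℕ)) (a b : ℕ) (h : ∀ x ∈ R, x ≤ b) :
    stepRow (R, S, O) (a, b) = (R ++ [b], S ++ [a], O) := by
  simp [stepRow, insR_of_all_le b R h]

theorem stepRow_some (U V S : List ℕ) (O : List (ℕ × ℕ)) (a b y : ℕ) (h : ∀ x ∈ U, x ≤ b)
    (hy : b < y) :
    stepRow (U ++ y :: V, S, O) (a, b) = (U ++ b :: V, S, O ++ [(a, y)]) := by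
  simp [stepRow, insR_of_split b y U V h hy]

theorem pass_compare (u1 u2 : List (ℕ × ℕ)) (a b : ℕ)
    (h1 : ∀ p ∈ u1, p.1 ≤ b ∧ p.2 ≤ a) (h2 : ∀ p ∈ u2, b < p.1 ∧ p.2 < a) :
    ((∀ x ∈ (rpass (u1 ++ u2)).2.1, x ≤ b) ∧
      rpass (u1 ++ (b, a) :: u2) = ((rpass (u1 ++ u2)).1 ++ [a], (rpass (u1 ++ u2)).2.1 ++ [b],
        (rpass (u1 ++ u2)).2.2)) ∨
    ∃ b' S1 S2 O', b < b' ∧ (∀ x ∈ S1, x ≤ b) ∧ (rpass (u1 ++ u2)).2.1 = S1 ++ b' :: S2 ∧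
      O'.Perm ((b', a) :: (rpass (u1 ++ u2)).2.2) ∧
      rpass (u1 ++ (b, a) :: u2) = ((rpass (u1 ++ u2)).1, S1 ++ b :: S2, O') := by
  induction u2 using List.reverseRecOn with
  | nil =>
    left
    simp only [List.append_nil]
    refine ⟨pass_tops_le u1 b (fun p hp => (h1 p hp).1), ?_⟩
    rw [pass_snoc]
    exact stepRow_none _ _ _ _ _ (pass_row_le u1 a (fun p hp => (h1 p hp).2))
  | append_singleton u2 q ih =>
    obtain ⟨c, v⟩ := q
    have ih := ih (fun p hp => h2 p (by simp [hp]))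
    have hq : b < c ∧ v < a := h2 (c, v) (by simp)
    have e1 : u1 ++ (b, a) :: (u2 ++ [(c, v)]) = (u1 ++ (b, a) :: u2) ++ [(c, v)] := by simp
    have e2 : u1 ++ (u2 ++ [(c, v)]) = (u1 ++ u2) ++ [(c, v)] := by simp
    rw [e1, e2, pass_snoc (u1 ++ (b, a) :: u2)]
    rcases ih with ⟨i1, i2⟩ | ⟨b', S1, S2, O', i1, i2, i3, i4, i5⟩
    · rw [i2]
      rcases pass_snoc_cases (u1 ++ u2) c v with ⟨k1, k2, k3⟩ | ⟨U, y, V, k1, k2, k3, k4, k5⟩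
      · right
        rw [k1]
        refine ⟨c, (rpass (u1 ++ u2)).2.1, [], (rpass (u1 ++ u2)).2.2 ++ [(c, a)], hq.1, i1, rfl,
          List.perm_append_singleton _ _, ?_⟩
        exact stepRow_some _ [] _ _ _ _ _ k3 hq.2
      · left
        rw [k5]
        refine ⟨i1, ?_⟩
        rw [k1]
        have := stepRow_some U (V ++ [a]) ((rpass (u1 ++ u2)).2.1 ++ [b]) (rpass (u1 ++ u2)).2.2
          c v y k2 k3
        simpa using this
    · right
      rw [i5]
      rcases pass_snoc_cases (u1 ++ u2) c v with ⟨k1, k2, k3⟩ | ⟨U, y, V, k1, k2, k3, k4, k5⟩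
      · rw [k1]
        refine ⟨b', S1, S2 ++ [c], O', i1, i2, by simp [i3], i4, ?_⟩
        rw [stepRow_none _ _ _ _ _ k3]; simp
      · rw [k5]
        refine ⟨b', S1, S2, O' ++ [(c, y)], i1, i2, i3, ?_, ?_⟩
        · exact i4.append_right [(c, y)]
        · rw [k1, stepRow_some _ _ _ _ _ _ _ k2 k3]

theorem sorted_split (M : List (ℕ × ℕ)) (hM : M.Pairwise lexLe) (q : ℕ × ℕ) :
    ∃ u1 u2, M = u1 ++ u2 ∧ (∀ p ∈ u1, lexLe p q) ∧ (∀ p ∈ u2, ¬ lexLe p q) := by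
  induction M with
  | nil => exact ⟨[], [], by simp⟩
  | cons x M ih =>
    rw [List.pairwise_cons] at hM
    by_cases h : lexLe x q
    · obtain ⟨u1, u2, e, h1, h2⟩ := ih hM.2
      refine ⟨x :: u1, u2, by simp [e], ?_, h2⟩
      intro p hp
      rcases List.mem_cons.1 hp with rfl | hp
      · exact h
      · exact h1 p hp
    · refine ⟨[], x :: M, by simp, by simp, ?_⟩
      intro p hp hpq
      rcases List.mem_cons.1 hp with rfl | hp
      · exact h hpq
      · exact h (lexLe_trans (hM.1 p hp) hpq)

theorem pass_sw (L : List (ℕ × ℕ)) (hL : L.Pairwise lexLe) :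
    rpass (sw L) = ((rpass L).2.1, (rpass L).1, sw (rpass L).2.2) := by
  induction L using List.reverseRecOn with
  | nil => simp [rpass, sw, sortLex]
  | append_singleton L ab ih =>
    obtain ⟨a, b⟩ := ab
    have hL0 := hL
    rw [List.pairwise_append] at hL
    obtain ⟨hL1, -, hL2⟩ := hL
    have hL2 : ∀ p ∈ L, lexLe p (a, b) := fun p hp => hL2 p hp _ (by simp)
    have ih := ih hL1
    have hMs := sw_sorted L
    obtain ⟨u1, u2, e, h1, h2⟩ := sorted_split (sw L) hMs (b, a)
    have hmem : ∀ p ∈ sw L, lexLe (p.2, p.1) (a, b) := fun p hp =>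
      hL2 _ ((mem_sw L p.1 p.2).1 hp)
    have c1 : ∀ p ∈ u1, p.1 ≤ b ∧ p.2 ≤ a := by
      intro p hp
      have k1 := h1 p hp
      have k2 := hmem p (by simp [e, hp])
      unfold lexLe at k1 k2; simp at k1 k2; omega
    have c2 : ∀ p ∈ u2, b < p.1 ∧ p.2 < a := by
      intro p hp
      have k1 := h2 p hp
      have k2 := hmem p (by simp [e, hp])
      unfold lexLe at k1 k2; simp at k1 k2; omega
    have e3 : sw (L ++ [(a, b)]) = u1 ++ (b, a) :: u2 := by
      apply sortLex_eq
      · rw [List.map_append]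
        have : (L.map Prod.swap).Perm (u1 ++ u2) := by rw [← e]; exact (sw_perm L).symm
        refine (this.append_right _).trans ?_
        simp only [List.map_cons, List.map_nil, Prod.swap]
        refine (List.perm_append_singleton _ _).trans ?_
        exact List.perm_middle.symm
      · rw [e] at hMs
        rw [List.pairwise_append] at hMs ⊢
        refine ⟨hMs.1, ?_, ?_⟩
        · rw [List.pairwise_cons]
          refine ⟨fun p hp => ?_, hMs.2.1⟩
          exact (lexLe_total (b, a) p).resolve_right (h2 p hp)
        · intro p hp q hq
          rcases List.mem_cons.1 hq with rfl | hq
          · exact h1 p hp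
          · exact hMs.2.2 p hp q hq
    have hout : (rpass (sw (L ++ [(a, b)]))).2.2.Pairwise lexLe :=
      pass_out_sorted _ (sw_sorted _)
    have hpc := pass_compare u1 u2 a b c1 c2
    rw [← e3, ← e, ih] at hpc
    simp only at hpc
    rcases hpc with ⟨i1, i2⟩ | ⟨b', S1, S2, O', i1, i2, i3, i4, i5⟩
    · rw [i2, pass_snoc, stepRow_none _ _ _ _ _ i1]
    · rw [i5, pass_snoc]
      have : rpass L = (S1 ++ b' :: S2, (rpass L).2.1, (rpass L).2.2) := by rw [← i3]
      rw [this, stepRow_some _ _ _ _ _ _ _ i2 i1]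
      simp only [Prod.mk.injEq, true_and]
      rw [i5] at hout
      refine (sortLex_eq ?_ hout).symm
      refine List.Perm.trans ?_ i4.symm
      rw [List.map_append]
      simp only [List.map_cons, List.map_nil, Prod.swap]
      refine (List.perm_append_singleton _ _).trans ?_
      exact List.Perm.cons _ (sw_perm _).symm

theorem rsk_sw (L : List (ℕ × ℕ)) (hL : L.Pairwise lexLe) :
    rsk (sw L) = ((rsk L).2, (rsk L).1) := by
  induction hk : L.length using Nat.strong_induction_on generalizing L with
  | _ k ih =>
    by_cases h0 : L = []
    · subst h0; simp [rsk, sw, sortLex]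
    · have h1 : sw L ≠ [] := by
        intro h
        have := (sw_perm L).length_eq
        rw [h] at this
        simp at this
        exact h0 (List.length_eq_zero_iff.1 this.symm)
      rw [rsk_rows _ h1, rsk_rows _ h0, pass_sw L hL]
      simp only
      rw [ih _ (by rw [← hk]; exact pass_out_lt L h0) _ (pass_out_sorted L hL) rfl]

/-! ### Crystal operators on words -/

/-- Number of open brackets after scanning `w`, starting with `e` open brackets. -/
def ep (i : ℕ) : ℕ → List ℕ → ℕ
  | e, [] => e
  | e, x :: w => if x = i + 1 then ep i (e + 1) w else if x = i then ep i (e - 1) w else ep i e w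

/-- The lowering operator on the word `w` preceded by `e` open brackets. -/
def fW (i : ℕ) : ℕ → List ℕ → Option (List ℕ)
  | _, [] => none
  | e, x :: w =>
    if x = i + 1 then (fW i (e + 1) w).map (x :: ·)
    else if x = i then
      if e = 0 then some ((fW i 0 w).elim ((i + 1) :: w) (i :: ·))
      else (fW i (e - 1) w).map (x :: ·)
    else (fW i e w).map (x :: ·)

theorem ep_append (i e : ℕ) (u v : List ℕ) : ep i e (u ++ v) = ep i (ep i e u) v := by
  induction u generalizing e with
  | nil => rfl
  | cons x u ih => simp only [List.cons_append, ep]; split_ifs <;> exact ih _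

theorem fW_append (i e : ℕ) (u v : List ℕ) :
    fW i e (u ++ v) = (fW i (ep i e u) v).elim ((fW i e u).map (· ++ v)) (fun v' => some (u ++ v')) := by
  induction u generalizing e with
  | nil => cases h : fW i e v <;> simp [ep, fW, h]
  | cons x u ih =>
    simp only [List.cons_append, ep, fW, ih]
    split_ifs with h1 h2 h3
    · cases fW i (ep i (e + 1) u) v <;> cases fW i (e + 1) u <;> simp
    · subst h3
      simp only [Nat.zero_sub]
      cases fW i (ep i 0 u) v <;> cases fW i 0 u <;> simp [h2]
    · cases fW i (ep i (e - 1) u) v <;> cases fW i (e - 1) u <;> simp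
    · cases fW i (ep i e u) v <;> cases fW i e u <;> simp

theorem fW_append_of_none (i e : ℕ) (u v : List ℕ) (h : fW i (ep i e u) v = none) :
    fW i e (u ++ v) = (fW i e u).map (· ++ v) := by
  simp [fW_append, h]

theorem fW_append_of_some (i e : ℕ) (u v v' : List ℕ) (h : fW i (ep i e u) v = some v') :
    fW i e (u ++ v) = some (u ++ v') := by
  simp [fW_append, h]

theorem fW_cons_cases (i e x : ℕ) (w z : List ℕ) (h : fW i e (x :: w) = some z) :
    (∃ e' w', fW i e' w = some w' ∧ z = x :: w') ∨
      (x = i ∧ fW i 0 w = none ∧ z = (i + 1) :: w) := by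
  unfold fW at h
  split_ifs at h with h1 h2 h3
  · left
    obtain ⟨w', hw, rfl⟩ := Option.map_eq_some_iff.1 h
    exact ⟨_, w', hw, rfl⟩
  · cases hw : fW i 0 w with
    | none => right; simp [hw] at h; exact ⟨h2, rfl, h.symm⟩
    | some w' => left; simp [hw] at h; exact ⟨0, w', hw, by rw [h2, h]⟩
  · left
    obtain ⟨w', hw, rfl⟩ := Option.map_eq_some_iff.1 h
    exact ⟨_, w', hw, rfl⟩
  · left
    obtain ⟨w', hw, rfl⟩ := Option.map_eq_some_iff.1 h
    exact ⟨_, w', hw, rfl⟩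

theorem fW_length (i e : ℕ) (w w' : List ℕ) (h : fW i e w = some w') : w'.length = w.length := by
  induction w generalizing e w' with
  | nil => simp [fW] at h
  | cons x w ih =>
    rcases fW_cons_cases i e x w w' h with ⟨e', z, h1, rfl⟩ | ⟨-, -, rfl⟩
    · simp [ih _ _ h1]
    · simp

theorem fW_mem (i e : ℕ) (w w' : List ℕ) (h : fW i e w = some w') :
    ∀ x ∈ w', x ∈ w ∨ x = i + 1 := by
  induction w generalizing e w' with
  | nil => simp [fW] at h
  | cons x w ih =>
    rcases fW_cons_cases i e x w w' h with ⟨e', z, h1, rfl⟩ | ⟨-, -, rfl⟩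
    · intro y hy
      rcases List.mem_cons.1 hy with rfl | hy
      · simp
      · rcases ih _ _ h1 y hy with h | h <;> simp [h]
    · intro y hy
      rcases List.mem_cons.1 hy with rfl | hy
      · simp
      · simp [hy]

theorem fW_neutral (i e : ℕ) (w : List ℕ) (h : ∀ x ∈ w, x ≠ i ∧ x ≠ i + 1) :
    ep i e w = e ∧ fW i e w = none := by
  induction w generalizing e with
  | nil => simp [ep, fW]
  | cons x w ih =>
    have h1 := h x (by simp)
    have h2 := ih e (fun y hy => h y (by simp [hy]))
    simp [ep, fW, h1.1, h1.2, h2.1, h2.2]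

theorem fW_no_close (i e : ℕ) (w : List ℕ) (h : ∀ x ∈ w, x ≠ i) :
    ∃ k, (∀ e, ep i e w = e + k) ∧ ∀ e, fW i e w = none := by
  induction w with
  | nil => exact ⟨0, by simp [ep], by simp [fW]⟩
  | cons x w ih =>
    have h1 := h x (by simp)
    obtain ⟨k, h2, h3⟩ := ih (fun y hy => h y (by simp [hy]))
    by_cases hx : x = i + 1
    · exact ⟨k + 1, fun e => by simp [ep, hx, h2]; omega, fun e => by simp [fW, hx, h3]⟩
    · exact ⟨k, fun e => by simp [ep, hx, h1, h2], fun e => by simp [fW, hx, h1, h3]⟩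

theorem fW_rep (i e p : ℕ) : ep i e (List.replicate p i) = e - p ∧
    fW i e (List.replicate p i) =
      if e < p then some (List.replicate (p - 1) i ++ [i + 1]) else none := by
  induction p generalizing e with
  | zero => simp [ep, fW]
  | succ p ih =>
    simp only [List.replicate_succ, ep, fW, ih]
    refine ⟨by simp; omega, ?_⟩
    rcases Nat.eq_zero_or_pos e with rfl | he
    · rcases p with _ | p
      · simp
      · simp [List.replicate_succ]
    · have h1 : e ≠ 0 := by omega
      by_cases h2 : e < p + 1
      · have h3 : e - 1 < p := by omega
        have h4 : p ≠ 0 := by omega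
        obtain ⟨p, rfl⟩ := Nat.exists_eq_succ_of_ne_zero h4
        simp [h1, h2, h3, List.replicate_succ]
      · have h3 : ¬ e - 1 < p := by omega
        simp [h1, h2, h3]

theorem pairs_ext {L L' : List (ℕ × ℕ)} (h1 : L.map Prod.fst = L'.map Prod.fst)
    (h2 : L.map Prod.snd = L'.map Prod.snd) : L = L' := by
  induction L generalizing L' with
  | nil => cases L' <;> simp_all
  | cons x L ih =>
    cases L' with
    | nil => simp at h1
    | cons y L' =>
      simp only [List.map_cons, List.cons.injEq] at h1 h2
      rw [ih h1.2 h2.2, Prod.ext h1.1 h2.1]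

theorem fW_pairs_lower (i e : ℕ) (L L' : List (ℕ × ℕ)) (h1 : L'.map Prod.fst = L.map Prod.fst)
    (h : fW i e (L.map Prod.snd) = some (L'.map Prod.snd)) (q : ℕ × ℕ)
    (hq : ∀ p ∈ L, lexLe q p) : ∀ p ∈ L', lexLe q p := by
  induction L generalizing e L' with
  | nil => simp [fW] at h
  | cons x L ih =>
    cases L' with
    | nil => simp
    | cons y L' =>
      simp only [List.map_cons, List.cons.injEq] at h h1
      rcases fW_cons_cases _ _ _ _ _ h with ⟨e', z, k1, k2⟩ | ⟨k1, k2, k3⟩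
      · simp only [List.cons.injEq] at k2
        obtain ⟨k2, rfl⟩ := k2
        have hxy : y = x := Prod.ext h1.1 k2
        intro p hp
        rcases List.mem_cons.1 hp with rfl | hp
        · rw [hxy]; exact hq x (by simp)
        · exact ih _ _ h1.2 k1 (fun p hp => hq p (by simp [hp])) p hp
      · simp only [List.cons.injEq] at k3
        have hLL := pairs_ext h1.2 k3.2
        subst hLL
        intro p hp
        rcases List.mem_cons.1 hp with rfl | hp
        · have := hq x (by simp)
          unfold lexLe at this ⊢
          omega
        · exact hq p (by simp [hp])

theorem fW_pairs_sorted (i e : ℕ) (L L' : List (ℕ × ℕ)) (h1 : L'.map Prod.fst = L.map Prod.fst)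
    (h : fW i e (L.map Prod.snd) = some (L'.map Prod.snd)) (hs : L.Pairwise lexLe) :
    L'.Pairwise lexLe := by
  induction L generalizing e L' with
  | nil => simp [fW] at h
  | cons x L ih =>
    cases L' with
    | nil => simp
    | cons y L' =>
      rw [List.pairwise_cons] at hs ⊢
      simp only [List.map_cons, List.cons.injEq] at h h1
      rcases fW_cons_cases _ _ _ _ _ h with ⟨e', z, k1, k2⟩ | ⟨k1, k2, k3⟩
      · simp only [List.cons.injEq] at k2
        obtain ⟨k2, rfl⟩ := k2
        have hxy : y = x := Prod.ext h1.1 k2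
        subst hxy
        exact ⟨fW_pairs_lower _ _ _ _ h1.2 k1 _ hs.1, ih _ _ h1.2 k1 hs.2⟩
      · simp only [List.cons.injEq] at k3
        have hLL := pairs_ext h1.2 k3.2
        subst hLL
        refine ⟨?_, hs.2⟩
        cases L' with
        | nil => simp
        | cons z T =>
          have hz : lexLe y z := by
            have h2 := hs.1 z (by simp)
            have h3 : ¬ z.2 = i := by
              intro hzi
              simp [fW, hzi] at k2
            unfold lexLe at h2 ⊢
            omega
          rw [List.pairwise_cons] at hs
          intro p hp
          rcases List.mem_cons.1 hp with rfl | hp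
          · exact hz
          · exact lexLe_trans hz (hs.2.1 p hp)

theorem fW_sorted (i e : ℕ) (w w' : List ℕ) (h : fW i e w = some w')
    (hs : w.Pairwise (· ≤ ·)) : w'.Pairwise (· ≤ ·) := by
  have h2 : (w'.map (fun x => (0, x))).Pairwise lexLe := by
    apply fW_pairs_sorted i e (w.map (fun x => (0, x)))
    · simp [List.eq_replicate_iff, Function.comp_def, fW_length i e w w' h]
    · simpa [Function.comp_def] using h
    · rw [List.pairwise_map]
      exact hs.imp (fun h => Or.inr ⟨rfl, h⟩)
  rw [List.pairwise_map] at h2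
  exact h2.imp (fun h => by unfold lexLe at h; simpa using h)

/-- The word obtained by bumping: bumped letter followed by the new row. -/
def bumpWord (b : ℕ) (R : List ℕ) : List ℕ := (insR b R).1.toList ++ (insR b R).2

theorem exists_snoc {l : List ℕ} {k : ℕ} (h : l.length = k + 1) :
    ∃ l' x, l = l' ++ [x] ∧ l'.length = k := by
  rcases List.eq_nil_or_concat l with rfl | ⟨l', x, rfl⟩
  · simp at h
  · exact ⟨l', x, by simp, by simpa using h⟩

theorem le_of_sorted_snoc (R : List ℕ) (b : ℕ) (h : (R ++ [b]).Pairwise (· ≤ ·)) :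
    ∀ x ∈ R, x ≤ b := by
  rw [List.pairwise_append] at h
  intro x hx; exact h.2.2 x hx b (by simp)

theorem sorted_le_split (U : List ℕ) (i : ℕ) (h : U.Pairwise (· ≤ ·)) (hU : ∀ x ∈ U, x ≤ i) :
    ∃ A p, U = A ++ List.replicate p i ∧ ∀ x ∈ A, x < i := by
  induction U using List.reverseRecOn with
  | nil => exact ⟨[], 0, by simp, by simp⟩
  | append_singleton U x ih =>
    have hx : x ≤ i := hU x (by simp)
    rcases Nat.lt_or_eq_of_le hx with hx | rfl
    · refine ⟨U ++ [x], 0, by simp, ?_⟩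
      intro y hy
      rcases List.mem_append.1 hy with hy | hy
      · have := le_of_sorted_snoc U x h y hy; omega
      · simp at hy; omega
    · obtain ⟨A, p, h1, h2⟩ := ih (List.pairwise_append.1 h).1 (fun y hy => hU y (by simp [hy]))
      refine ⟨A, p + 1, ?_, h2⟩
      rw [List.replicate_succ', h1]; simp

theorem bump_local (i e b : ℕ) (R : List ℕ) (hR : R.Pairwise (· ≤ ·)) :
    ep i e (R ++ [b]) = ep i e (bumpWord b R) ∧
    ((fW i e (R ++ [b]) = none ∧ fW i e (bumpWord b R) = none) ∨
      ∃ R' b', R'.length = R.length ∧ fW i e (R ++ [b]) = some (R' ++ [b']) ∧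
        (insR b' R').1.isSome = (insR b R).1.isSome ∧
        fW i e (bumpWord b R) = some (bumpWord b' R')) := by
  rcases insR_cases b R with ⟨h1, h2⟩ | ⟨U, y, V, rfl, h2, h3, h4⟩
  · have hY : bumpWord b R = R ++ [b] := by simp [bumpWord, h1]
    rw [hY]
    refine ⟨rfl, ?_⟩
    cases hf : fW i e (R ++ [b]) with
    | none => simp
    | some z =>
      right
      obtain ⟨R', b', rfl, hl⟩ := exists_snoc (l := z) (k := R.length)
        (by rw [fW_length _ _ _ _ hf]; simp)
      have hs := fW_sorted _ _ _ _ hf (sorted_snoc R b hR h2)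
      have h5 := insR_of_all_le b' R' (le_of_sorted_snoc _ _ hs)
      exact ⟨R', b', hl, rfl, by simp [h5, h1], by simp [bumpWord, h5]⟩
  · have hY : bumpWord b (U ++ y :: V) = [y] ++ (U ++ ([b] ++ V)) := by simp [bumpWord, h4]
    rw [hY]
    have hR' := hR
    simp only [List.pairwise_append, List.pairwise_cons] at hR'
    obtain ⟨hU, ⟨hyV, hV⟩, hUV⟩ := hR'
    by_cases hbi : b < i
    · -- the letters of `U` and `b` are neutral
      have nU : ∀ e, ep i e U = e ∧ fW i e U = none := fun e =>
        fW_neutral i e U (fun x hx => by have := h2 x hx; omega)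
      have nb : ∀ e, ep i e [b] = e ∧ fW i e [b] = none := fun e =>
        fW_neutral i e [b] (fun x hx => by simp at hx; omega)
      have hX : U ++ y :: V ++ [b] = U ++ ((y :: V) ++ [b]) := by simp
      have hyV' : y :: V = [y] ++ V := rfl
      constructor
      · rw [hX, hyV']
        simp only [ep_append, (nU _).1, (nb _).1]
      · have fX : fW i e (U ++ y :: V ++ [b]) = (fW i e (y :: V)).map (fun z => U ++ z ++ [b]) := by
          rw [hX, fW_append, (nU e).1, (nU e).2, fW_append, (nb _).2]
          cases fW i e (y :: V) <;> simp
        have fY : fW i e ([y] ++ (U ++ ([b] ++ V))) =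
            (fW i (ep i e [y]) V).elim ((fW i e [y]).map (· ++ (U ++ ([b] ++ V))))
              (fun V' => some ([y] ++ (U ++ ([b] ++ V')))) := by
          rw [fW_append]
          rw [fW_append i _ U, (nU _).1, (nU _).2, fW_append i _ [b], (nb _).1, (nb _).2]
          cases fW i (ep i e [y]) V <;> simp
        have fyV : fW i e (y :: V) = (fW i (ep i e [y]) V).elim ((fW i e [y]).map (· ++ V))
              (fun V' => some ([y] ++ V')) := by
          rw [hyV', fW_append]
        rw [fX, fY, fyV]
        have fin : ∀ y' V', b < y' → V'.length = V.length →
            (U ++ y' :: V').length = (U ++ y :: V).length ∧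
            (insR b (U ++ y' :: V')).1.isSome = (insR b (U ++ y :: V)).1.isSome ∧
            bumpWord b (U ++ y' :: V') = [y'] ++ (U ++ ([b] ++ V')) := by
          intro y' V' hy' hl
          have := insR_of_split b y' U V' h2 hy'
          refine ⟨by simp [hl], by simp [this, h4], by simp [bumpWord, this]⟩
        cases hfV : fW i (ep i e [y]) V with
        | some V' =>
          right
          obtain ⟨f1, f2, f3⟩ := fin y V' h3 (fW_length _ _ _ _ hfV)
          exact ⟨U ++ y :: V', b, f1, by simp, f2, by simp [f3]⟩
        | none =>
          cases hfy : fW i e [y] with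
          | none => left; simp
          | some z =>
            right
            obtain ⟨R0, y', rfl, hl⟩ := exists_snoc (l := z) (k := 0) (fW_length _ _ _ _ hfy)
            have hR0 := List.length_eq_zero_iff.1 hl
            subst hR0
            have hy' : b < y' := by
              have := fW_mem _ _ _ _ hfy y' (by simp)
              simp at this; omega
            obtain ⟨f1, f2, f3⟩ := fin y' V hy' rfl
            exact ⟨U ++ y' :: V, b, f1, by simp, f2, by simp [f3]⟩
    · by_cases hyi : i + 1 < y
      · have nV : ∀ e, ep i e V = e ∧ fW i e V = none := fun e =>
          fW_neutral i e V (fun x hx => by have := hyV x hx; omega)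
        have ny : ∀ e, ep i e [y] = e ∧ fW i e [y] = none := fun e =>
          fW_neutral i e [y] (fun x hx => by simp at hx; omega)
        have hX : U ++ y :: V ++ [b] = U ++ ([y] ++ (V ++ [b])) := by simp
        have fX : fW i e (U ++ y :: V ++ [b]) =
            (fW i (ep i e U) [b]).elim ((fW i e U).map (fun z => z ++ (y :: V) ++ [b]))
              (fun z => some (U ++ y :: V ++ z)) := by
          rw [hX, fW_append, fW_append i _ [y], (ny _).1, (ny _).2, fW_append i _ V, (nV _).1,
            (nV _).2]
          cases fW i (ep i e U) [b] <;> simp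
        have fY : fW i e ([y] ++ (U ++ ([b] ++ V))) =
            (fW i e (U ++ [b])).map (fun z => [y] ++ (z ++ V)) := by
          rw [fW_append, (ny _).1, (ny _).2, ← List.append_assoc U, fW_append i _ (U ++ [b]),
            (nV _).2]
          cases fW i e (U ++ [b]) <;> simp
        have fUb := fW_append i e U [b]
        constructor
        · rw [hX]
          simp only [ep_append, (nV _).1, (ny _).1]
        · have fin : ∀ U' b', fW i e (U ++ [b]) = some (U' ++ [b']) → 
              (U' ++ y :: V).length = (U ++ y :: V).length ∧
              (insR b' (U' ++ y :: V)).1.isSome = (insR b (U ++ y :: V)).1.isSome ∧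
              bumpWord b' (U' ++ y :: V) = [y] ++ (U' ++ ([b'] ++ V)) := by
            intro U' b' hf
            have hs := fW_sorted _ _ _ _ hf (sorted_snoc U b hU h2)
            have hl := fW_length _ _ _ _ hf
            have hb' : b' < y := by
              have := fW_mem _ _ _ _ hf b' (by simp)
              simp at this
              rcases this with (h | h) | h
              · have := h2 _ h; omega
              · omega
              · omega
            have := insR_of_split b' y U' V (le_of_sorted_snoc _ _ hs) hb'
            refine ⟨by simp at hl; simp [hl], by simp [this, h4], by simp [bumpWord, this]⟩
          rw [fX, fY]
          cases hfb : fW i (ep i e U) [b] with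
          | some z =>
            right
            obtain ⟨R0, b', rfl, hl⟩ := exists_snoc (l := z) (k := 0) (fW_length _ _ _ _ hfb)
            have hR0 := List.length_eq_zero_iff.1 hl
            subst hR0
            rw [hfb] at fUb
            simp only [Option.elim, List.nil_append] at fUb
            obtain ⟨f1, f2, f3⟩ := fin U b' fUb
            exact ⟨U ++ y :: V, b', f1, by simp, f2, by simp [f3, fUb]⟩
          | none =>
            rw [hfb] at fUb
            cases hfU : fW i e U with
            | none => left; rw [hfU] at fUb; simp [fUb]
            | some U' =>
              right
              rw [hfU] at fUb
              simp only [Option.elim, Option.map_some] at fUb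
              obtain ⟨f1, f2, f3⟩ := fin U' b fUb
              exact ⟨U' ++ y :: V, b, f1, by simp, f2, by simp [f3, fUb]⟩
      · have hb : b = i := by omega
        have hy : y = i + 1 := by omega
        subst hb hy
        obtain ⟨A, p, rfl, hA⟩ := sorted_le_split U b hU h2
        have nA : ∀ e, ep b e A = e ∧ fW b e A = none := fun e =>
          fW_neutral b e A (fun x hx => by have := hA x hx; omega)
        obtain ⟨k, kV, nV⟩ := fW_no_close b e V (fun x hx => by have := hyV x hx; omega)
        have hX : A ++ List.replicate p b ++ (b + 1) :: V ++ [b] =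
          A ++ (List.replicate p b ++ ([b + 1] ++ (V ++ [b]))) := by simp
        have hYY : [b + 1] ++ (A ++ List.replicate p b ++ ([b] ++ V)) =
          [b + 1] ++ (A ++ (List.replicate (p + 1) b ++ V)) := by
          simp [List.replicate_succ']
        have e1 : ∀ e, ep b e [b + 1] = e + 1 := by simp [ep]
        have e2 : ∀ e, ep b e [b] = e - 1 := by simp [ep]
        have f1 : ∀ e, fW b e [b + 1] = none := by simp [fW]
        have f2 : ∀ e, fW b (e + 1) [b] = none := by simp [fW]
        rw [hX, hYY]
        constructor
        · simp only [ep_append, (nA _).1, e1, e2, kV, (fW_rep _ _ _).1]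
          omega
        · have fX : fW b e (A ++ (List.replicate p b ++ ([b + 1] ++ (V ++ [b])))) =
              if e < p then some (A ++ List.replicate (p - 1) b ++ (b + 1) :: (b + 1) :: V ++ [b])
              else none := by
            have : fW b (e - p + 1 + k) [b] = none := by
              rw [show e - p + 1 + k = (e - p + k) + 1 by omega]; exact f2 _
            rw [fW_append, (nA _).1, (nA _).2, fW_append, (fW_rep _ _ _).1, (fW_rep _ _ _).2,
              fW_append, e1, f1, fW_append, kV, nV, this]
            split_ifs <;> simp
          have fY : fW b e ([b + 1] ++ (A ++ (List.replicate (p + 1) b ++ V))) =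
              if e < p then some ((b + 1) :: (A ++ List.replicate p b ++ (b + 1) :: V))
              else none := by
            rw [fW_append, e1, f1, fW_append, (nA _).1, (nA _).2, fW_append, (fW_rep _ _ _).2, nV]
            by_cases h : e < p <;> simp [h]
          rw [fX, fY]
          split_ifs with hep
          · right
            obtain ⟨p, rfl⟩ := Nat.exists_eq_succ_of_ne_zero (show p ≠ 0 by omega)
            have hins := insR_of_split b (b + 1) (A ++ List.replicate p b) ((b + 1) :: V)
              (fun x hx => h2 x (by
                simp at hx ⊢
                tauto)) (by omega)
            refine ⟨A ++ List.replicate p b ++ (b + 1) :: (b + 1) :: V, b, ?_, by simp, ?_, ?_⟩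
            · simp; omega
            · rw [hins, h4]
            · unfold bumpWord; rw [hins]; simp [List.replicate_succ']
          · left; simp

theorem stepRow_eq (R S : List ℕ) (O : List (ℕ × ℕ)) (a b : ℕ) :
    stepRow (R, S, O) (a, b) = ((insR b R).2, S ++ (if (insR b R).1.isSome then [] else [a]),
      O ++ (insR b R).1.toList.map (fun y => (a, y))) := by
  unfold stepRow
  rcases insR_cases b R with ⟨h1, h2⟩ | ⟨U, y, V, h1, h2, h3, h4⟩
  · simp [h1]
  · simp [h4]

theorem crystal_pass (i e : ℕ) (L : List (ℕ × ℕ)) :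
    ep i e (L.map Prod.snd) = ep i e ((rpass L).2.2.map Prod.snd ++ (rpass L).1) ∧
    ((fW i e (L.map Prod.snd) = none ∧
        fW i e ((rpass L).2.2.map Prod.snd ++ (rpass L).1) = none) ∨
      ∃ L', L'.map Prod.fst = L.map Prod.fst ∧ fW i e (L.map Prod.snd) = some (L'.map Prod.snd) ∧
        (rpass L').2.1 = (rpass L).2.1 ∧
        (rpass L').2.2.map Prod.fst = (rpass L).2.2.map Prod.fst ∧
        fW i e ((rpass L).2.2.map Prod.snd ++ (rpass L).1) =
          some ((rpass L').2.2.map Prod.snd ++ (rpass L').1)) := by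
  induction L using List.reverseRecOn with
  | nil => simp [rpass, fW]
  | append_singleton L ab ih =>
    obtain ⟨a, b⟩ := ab
    obtain ⟨ih1, ih2⟩ := ih
    have hRs := pass_sorted L
    rcases hp : rpass L with ⟨R, S, O⟩
    rw [hp] at ih1 ih2 hRs
    simp only at ih1 ih2 hRs
    obtain ⟨l1, l2⟩ := bump_local i (ep i e (O.map Prod.snd)) b R hRs
    have hstep : rpass (L ++ [(a, b)]) = _ := (pass_snoc L (a, b)).trans (by rw [hp, stepRow_eq])
    have hword : (rpass (L ++ [(a, b)])).2.2.map Prod.snd ++ (rpass (L ++ [(a, b)])).1 =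
        O.map Prod.snd ++ bumpWord b R := by
      rw [hstep]; simp [bumpWord, Function.comp_def]
    have hw : (L ++ [(a, b)]).map Prod.snd = L.map Prod.snd ++ [b] := by simp
    -- the general way to finish once the preimage is known
    have finish : ∀ (L0 : List (ℕ × ℕ)) (R' : List ℕ) (O' : List (ℕ × ℕ)) (b' : ℕ),
        L0.map Prod.fst = L.map Prod.fst → rpass L0 = (R', S, O') →
        O'.map Prod.fst = O.map Prod.fst →
        (insR b' R').1.isSome = (insR b R).1.isSome →
        fW i e (L.map Prod.snd ++ [b]) = some (L0.map Prod.snd ++ [b']) →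
        fW i e (O.map Prod.snd ++ bumpWord b R) = some (O'.map Prod.snd ++ bumpWord b' R') →
        ∃ L', L'.map Prod.fst = (L ++ [(a, b)]).map Prod.fst ∧
          fW i e ((L ++ [(a, b)]).map Prod.snd) = some (L'.map Prod.snd) ∧
          (rpass L').2.1 = (rpass (L ++ [(a, b)])).2.1 ∧
          (rpass L').2.2.map Prod.fst = (rpass (L ++ [(a, b)])).2.2.map Prod.fst ∧
          fW i e ((rpass (L ++ [(a, b)])).2.2.map Prod.snd ++ (rpass (L ++ [(a, b)])).1) =
            some ((rpass L').2.2.map Prod.snd ++ (rpass L').1) := by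
      intro L0 R' O' b' c1 c2 c3 c4 c5 c6
      have hstep' : rpass (L0 ++ [(a, b')]) = _ :=
        (pass_snoc L0 (a, b')).trans (by rw [c2, stepRow_eq])
      refine ⟨L0 ++ [(a, b')], by simp [c1], by rw [hw, c5]; simp, ?_, ?_, ?_⟩
      · rw [hstep, hstep', c4]
      · rw [hstep, hstep']
        simp only [List.map_append, c3, List.map_map, Function.comp_def]
        congr 1
        cases h1 : (insR b R).1 <;> cases h2 : (insR b' R').1 <;> simp [h1, h2] at c4 ⊢
      · rw [hword, c6, hstep']
        simp [bumpWord, Function.comp_def]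
    rw [hword, hw]
    constructor
    · rw [ep_append, ih1, ← ep_append, List.append_assoc, ep_append, l1, ← ep_append]
    · rcases l2 with ⟨m1, m2⟩ | ⟨R', b', m1, m2, m3, m4⟩
      · -- the operator acts in `O`
        have n1 : fW i (ep i e (L.map Prod.snd)) [b] = none := by
          rw [ih1, ep_append]
          rw [fW_append] at m1
          cases h : fW i (ep i (ep i e (O.map Prod.snd)) R) [b] with
          | none => rfl
          | some z => rw [h] at m1; simp at m1
        have n2 : fW i (ep i e (O.map Prod.snd)) R = none := by
          rw [ih1, ep_append] at n1
          rw [fW_append_of_none _ _ _ _ n1] at m1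
          simpa using m1
        rw [fW_append_of_none _ _ _ _ n1, fW_append_of_none _ _ _ _ m2]
        rw [fW_append_of_none _ _ _ _ n2] at ih2
        rcases ih2 with ⟨j1, j2⟩ | ⟨L0, j1, j2, j3, j4, j5⟩
        · left
          rw [j1]
          simp only [Option.map_eq_none_iff] at j2
          simp [j2]
        · right
          obtain ⟨wo, hwo, k1⟩ := Option.map_eq_some_iff.1 j5
          have hl : wo.length = ((rpass L0).2.2.map Prod.snd).length := by
            have := congrArg List.length j4
            rw [fW_length _ _ _ _ hwo]
            simpa using this.symm
          obtain ⟨k2, k3⟩ := List.append_inj k1 hl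
          have := finish L0 R (rpass L0).2.2 b j1 (by rw [← j3, k3]) j4 rfl
            (by rw [fW_append_of_none _ _ _ _ n1, j2]; rfl)
            (by rw [fW_append_of_none _ _ _ _ m2, hwo, k2]; rfl)
          rw [hword, hw, fW_append_of_none _ _ _ _ n1, fW_append_of_none _ _ _ _ m2] at this
          exact this
      · right
        have hY := fW_append_of_some _ _ _ _ _ m4
        cases h : fW i (ep i (ep i e (O.map Prod.snd)) R) [b] with
        | some z =>
          rw [fW_append_of_some _ _ _ _ _ h] at m2
          obtain ⟨k1, k2⟩ := List.append_inj (Option.some.inj m2) m1.symm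
          subst k1 k2
          rw [← ep_append, ← ih1] at h
          have := finish L R O b' rfl hp rfl m3 (fW_append_of_some _ _ _ _ _ h) hY
          rw [hword, hw] at this
          exact this
        | none =>
          rw [fW_append_of_none _ _ _ _ h] at m2
          obtain ⟨R0, hR0, k1⟩ := Option.map_eq_some_iff.1 m2
          obtain ⟨k2, k3⟩ := List.append_inj k1 (by rw [m1, fW_length _ _ _ _ hR0])
          simp only [List.cons.injEq, and_true] at k3
          subst k2 k3
          rw [← ep_append, ← ih1] at h
          rw [fW_append_of_some _ _ _ _ _ hR0] at ih2
          rcases ih2 with ⟨j1, j2⟩ | ⟨L0, j1, j2, j3, j4, j5⟩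
          · simp at j2
          · obtain ⟨k4, k5⟩ := List.append_inj (Option.some.inj j5) (by
              have := congrArg List.length j4
              simpa using this.symm)
            have hO := pairs_ext j4 k4.symm
            have := finish L0 R0 O b j1 (by rw [← j3, ← hO, k5]) rfl m3
              (by rw [fW_append_of_none _ _ _ _ h, j2]; rfl) hY
            rw [hword, hw] at this
            exact this

theorem rowWord_cons (R : List ℕ) (P : List (List ℕ)) : rowWord (R :: P) = rowWord P ++ R := by
  simp [rowWord]

theorem crystal_rsk (i : ℕ) (L : List (ℕ × ℕ)) :
    ep i 0 (rowWord (rsk L).1) = ep i 0 (L.map Prod.snd) ∧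
    ((fW i 0 (L.map Prod.snd) = none ∧ fW i 0 (rowWord (rsk L).1) = none) ∨
      ∃ L', L'.map Prod.fst = L.map Prod.fst ∧ fW i 0 (L.map Prod.snd) = some (L'.map Prod.snd) ∧
        (rsk L').2 = (rsk L).2 ∧ (rsk L').1.map List.length = (rsk L).1.map List.length ∧
        fW i 0 (rowWord (rsk L).1) = some (rowWord (rsk L').1)) := by
  induction hk : L.length using Nat.strong_induction_on generalizing L with
  | _ k ih =>
    by_cases h0 : L = []
    · subst h0; simp [rsk, rowWord, fW]
    · obtain ⟨c1, c2⟩ := crystal_pass i 0 L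
      have ih := ih _ (by rw [← hk]; exact pass_out_lt L h0) (rpass L).2.2 rfl
      rw [rsk_rows L h0]
      have hlen := pass_length L
      rcases hp : rpass L with ⟨R, S, O⟩
      rw [hp] at c1 c2 ih hlen
      simp only at c1 c2 ih hlen
      simp only [rowWord_cons]
      obtain ⟨i1, i2⟩ := ih
      refine ⟨by rw [c1, ep_append, i1, ep_append], ?_⟩
      rcases c2 with ⟨j1, j2⟩ | ⟨L0, j1, j2, j3, j4, j5⟩
      · left
        refine ⟨j1, ?_⟩
        rw [fW_append] at j2 ⊢
        rw [i1]
        cases h : fW i (ep i 0 (O.map Prod.snd)) R with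
        | some z => rw [h] at j2; simp at j2
        | none =>
          rw [h] at j2
          simp only [Option.elim, Option.map_eq_none_iff] at j2 ⊢
          rcases i2 with ⟨k1, k2⟩ | ⟨L1, k1, k2, -⟩
          · exact k2
          · rw [j2] at k2; simp at k2
      · right
        have hL0 : L0 ≠ [] := by
          intro h
          rw [h] at j1
          simp at j1
          exact h0 j1
        have hlen0 := pass_length L0
        refine ⟨L0, j1, j2, ?_⟩
        rw [rsk_rows L0 hL0]
        simp only [rowWord_cons, List.map_cons]
        have hll : (rpass L0).1.length = R.length := by rw [hlen0.1, j3, ← hlen.1]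
        have hO' : (O.map Prod.snd).length = ((rpass L0).2.2.map Prod.snd).length := by
          have := congrArg List.length j4
          simpa using this.symm
        cases h : fW i (ep i 0 (O.map Prod.snd)) R with
        | some z =>
          rw [fW_append_of_some _ _ _ _ _ h] at j5
          obtain ⟨k1, k2⟩ := List.append_inj (Option.some.inj j5) hO'
          have hO := pairs_ext j4 k1.symm
          refine ⟨by rw [j3, hO], by rw [hll, hO], ?_⟩
          rw [← i1] at h
          rw [fW_append_of_some _ _ _ _ _ h, hO, k2]
        | none =>
          rw [fW_append_of_none _ _ _ _ h] at j5
          obtain ⟨wo, hwo, k1⟩ := Option.map_eq_some_iff.1 j5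
          obtain ⟨k2, k3⟩ := List.append_inj k1 (by rw [fW_length _ _ _ _ hwo]; exact hO')
          rcases i2 with ⟨m1, -⟩ | ⟨O1, m1, m2, m3, m4, m5⟩
          · rw [hwo] at m1; simp at m1
          · have hO : (rpass L0).2.2 = O1 := by
              apply pairs_ext
              · rw [j4, m1]
              · rw [← k2]; rw [hwo] at m2; exact Option.some.inj m2
            rw [hO]
            refine ⟨by rw [j3, m3], by rw [hll, m4], ?_⟩
            rw [← i1] at h
            rw [fW_append_of_none _ _ _ _ h, m5, ← k3]; rfl

/-! ### Relating the frozen definitions to the abstract operators -/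

theorem ep_le_iff (i : ℕ) (w : List ℕ) (k : ℕ) :
    ep i 0 w ≤ k ↔ ∀ q ≤ w.length, (w.drop q).count (i + 1) ≤ (w.drop q).count i + k := by
  induction w using List.reverseRecOn generalizing k with
  | nil => simp [ep]
  | append_singleton w x ih =>
    have key : (∀ q ≤ (w ++ [x]).length, ((w ++ [x]).drop q).count (i + 1) ≤
        ((w ++ [x]).drop q).count i + k) ↔ ∀ q ≤ w.length, (w.drop q).count (i + 1) +
          [x].count (i + 1) ≤ (w.drop q).count i + [x].count i + k := by
      constructor
      · intro h q hq
        have := h q (by simp; omega)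
        rw [List.drop_append_of_le_length hq] at this
        simpa only [List.count_append] using this
      · intro h q hq
        by_cases hq' : q ≤ w.length
        · have := h q hq'
          rw [List.drop_append_of_le_length hq']
          simpa only [List.count_append] using this
        · rw [List.drop_of_length_le (by simp; omega)]; simp
    rw [key, ep_append]
    by_cases h1 : x = i + 1
    · subst h1
      simp only [ep, if_true, List.count_singleton_self]
      rcases k with _ | k
      · constructor
        · intro h; omega
        · intro h
          have := h w.length le_rfl
          simp at this
      · have := ih k
        simp only [Nat.add_le_add_iff_right]
        rw [this]
        apply forall₂_congr; intro q hq
        simp; omega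
    · by_cases h2 : x = i
      · subst h2
        simp only [ep, h1, if_false, if_true]
        rw [Nat.sub_le_iff_le_add, ih (k + 1)]
        apply forall₂_congr; intro q hq
        simp; omega
      · simp only [ep, h1, h2, if_false, ih k]
        apply forall₂_congr; intro q hq
        simp [List.count_singleton, h1, h2]

theorem unmatched_lt (w : List ℕ) (x i p : ℕ) (hp : p < w.length) :
    unmatchedClose (w ++ [x]) i p = unmatchedClose w i p := by
  unfold unmatchedClose
  have h1 : p < (w ++ [x]).length := by simp; omega
  have h2 : (w ++ [x]).getD p 0 = w.getD p 0 := by simp [List.getElem?_append_left hp]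
  rw [h2]
  simp only [h1, hp]
  congr 1
  rw [Bool.eq_iff_iff, List.all_eq_true, List.all_eq_true]
  apply forall₂_congr; intro q hq
  have hq : q ≤ p := by simp at hq; omega
  have : ((w ++ [x]).drop q).take (p + 1 - q) = (w.drop q).take (p + 1 - q) := by
    rw [List.drop_append_of_le_length (by omega), List.take_append_of_le_length (by simp; omega)]
  rw [this]

theorem unmatched_last (w : List ℕ) (x i : ℕ) :
    unmatchedClose (w ++ [x]) i w.length = true ↔ x = i ∧ ep i 0 w = 0 := by
  have h0 := ep_le_iff i w 0
  unfold unmatchedClose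
  simp only [Bool.and_eq_true, decide_eq_true_eq, List.all_eq_true, List.mem_range]
  have h2 : (w ++ [x]).getD w.length 0 = x := by simp
  rw [h2]
  have h3 : ∀ q ≤ w.length, ((w ++ [x]).drop q).take (w.length + 1 - q) = w.drop q ++ [x] := by
    intro q hq
    rw [List.drop_append_of_le_length hq, List.take_of_length_le (by simp; omega)]
  constructor
  · rintro ⟨⟨-, rfl⟩, h⟩
    refine ⟨rfl, ?_⟩
    have : ep x 0 w ≤ 0 := h0.2 (fun q hq => by
      have := h q (by omega)
      rw [h3 q hq] at this
      simp at this; omega)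
    omega
  · rintro ⟨rfl, h⟩
    refine ⟨⟨by simp, rfl⟩, fun q hq => ?_⟩
    have := h0.1 (by omega) q (by omega)
    rw [h3 q (by omega)]
    simp; omega

theorem rightUnmatched_snoc (w : List ℕ) (x i : ℕ) :
    rightUnmatched (w ++ [x]) i =
      if x = i ∧ ep i 0 w = 0 then some w.length else rightUnmatched w i := by
  unfold rightUnmatched
  rw [List.length_append, List.length_singleton, List.range_succ, List.reverse_append]
  simp only [List.reverse_cons, List.reverse_nil, List.nil_append, List.cons_append,
    List.find?_cons]
  have h := unmatched_last w x i
  split_ifs with hc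
  · rw [h.2 hc]
  · have : unmatchedClose (w ++ [x]) i w.length = false := by
      rw [Bool.eq_false_iff]; intro h'; exact hc (h.1 h')
    rw [this]
    apply List.find?_congr
    intro p hp
    exact unmatched_lt w x i p (by simpa using hp)

theorem rightUnmatched_lt (w : List ℕ) (i p : ℕ) (h : rightUnmatched w i = some p) :
    p < w.length := by
  have := List.mem_of_find?_eq_some h
  simpa using this

theorem fW_eq (w : List ℕ) (i : ℕ) :
    fW i 0 w = (rightUnmatched w i).map (fun p => w.set p (i + 1)) := by
  induction w using List.reverseRecOn with
  | nil => simp [fW, rightUnmatched]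
  | append_singleton w x ih =>
    rw [rightUnmatched_snoc, fW_append]
    split_ifs with hc
    · obtain ⟨rfl, h⟩ := hc
      simp [h, fW]
    · have : fW i (ep i 0 w) [x] = none := by
        by_cases h1 : x = i + 1
        · simp [fW, h1]
        · by_cases h2 : x = i
          · have h3 : ep i 0 w ≠ 0 := fun h => hc ⟨h2, h⟩
            simp [fW, h2, h3]
          · simp [fW, h1, h2]
      rw [this, ih]
      cases h : rightUnmatched w i with
      | none => simp
      | some p =>
        have := rightUnmatched_lt w i p h
        simp [List.set_append_left p _ this]

theorem rowWordBoxes_cons (R : List ℕ) (P : List (List ℕ)) :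
    rowWordBoxes (R :: P) = (rowWordBoxes P).map (fun rc : ℕ × ℕ => (rc.1 + 1, rc.2)) ++
      (List.range R.length).map (fun c => (0, c)) := by
  unfold rowWordBoxes
  rw [List.length_cons, List.range_succ_eq_map, List.reverse_cons, List.flatMap_append]
  congr 1
  · rw [← List.map_reverse, List.flatMap_map, List.map_flatMap]
    simp [Function.comp_def]
  · simp

theorem rowWordBoxes_length (P : List (List ℕ)) :
    (rowWordBoxes P).length = (rowWord P).length := by
  induction P with
  | nil => simp [rowWordBoxes, rowWord]
  | cons R P ih => rw [rowWordBoxes_cons, rowWord_cons]; simp [ih]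

theorem rowWord_set (P : List (List ℕ)) (p x : ℕ) (hp : p < (rowWord P).length) :
    rowWord (P.set ((rowWordBoxes P).getD p (0, 0)).1
      ((P.getD ((rowWordBoxes P).getD p (0, 0)).1 []).set ((rowWordBoxes P).getD p (0, 0)).2 x)) =
      (rowWord P).set p x := by
  induction P generalizing p with
  | nil => simp [rowWord] at hp
  | cons R P ih =>
    rw [rowWordBoxes_cons, rowWord_cons]
    rw [rowWord_cons, List.length_append] at hp
    by_cases h : p < (rowWord P).length
    · have hb : p < (rowWordBoxes P).length := by rw [rowWordBoxes_length]; exact h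
      have e1 : ((rowWordBoxes P).map (fun rc : ℕ × ℕ => (rc.1 + 1, rc.2)) ++
          (List.range R.length).map (fun c => (0, c))).getD p (0, 0) =
          (((rowWordBoxes P).getD p (0, 0)).1 + 1, ((rowWordBoxes P).getD p (0, 0)).2) := by
        simp [List.getElem?_append_left, hb]
      rw [e1]
      simp only [List.set_cons_succ, List.getD_cons_succ, rowWord_cons]
      rw [ih p h, List.set_append_left _ _ h]
    · have hb : (rowWordBoxes P).length ≤ p := by rw [rowWordBoxes_length]; omega
      have hr : p - (rowWord P).length < R.length := by omega
      have e1 : ((rowWordBoxes P).map (fun rc : ℕ × ℕ => (rc.1 + 1, rc.2)) ++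
          (List.range R.length).map (fun c => (0, c))).getD p (0, 0) =
          (0, p - (rowWord P).length) := by
        rw [List.getD_eq_getElem?_getD, List.getElem?_append_right (by simpa using hb)]
        simp [rowWordBoxes_length, hr]
      rw [e1]
      simp only [List.set_cons_zero, List.getD_cons_zero, rowWord_cons]
      rw [List.set_append_right _ _ (by omega)]

theorem set_lengths (P : List (List ℕ)) (r c x : ℕ) :
    (P.set r ((P.getD r []).set c x)).map List.length = P.map List.length := by
  rw [List.map_set, List.length_set]
  apply List.ext_getElem?
  intro k
  rw [List.getElem?_set]
  split_ifs with h1 h2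
  · subst h1
    simp at h2
    simp [h2]
  · subst h1
    rw [eq_comm, List.getElem?_eq_none_iff]; omega
  · rfl

theorem fLower_cases (i : ℕ) (P : List (List ℕ)) :
    (fLower i P = none ∧ fW i 0 (rowWord P) = none) ∨
    ∃ P', fLower i P = some P' ∧ fW i 0 (rowWord P) = some (rowWord P') ∧
      P'.map List.length = P.map List.length := by
  rw [fW_eq]
  unfold fLower
  cases h : rightUnmatched (rowWord P) i with
  | none => left; simp
  | some p =>
    right
    refine ⟨_, rfl, ?_, set_lengths _ _ _ _⟩
    rw [rowWord_set P p (i + 1) (rightUnmatched_lt _ _ _ h)]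
    rfl

theorem tableau_ext {P P' : List (List ℕ)} (h1 : rowWord P = rowWord P')
    (h2 : P.map List.length = P'.map List.length) : P = P' := by
  unfold rowWord at h1
  rw [List.flatMap_id, List.flatMap_id] at h1
  have : P.reverse = P'.reverse := by
    rw [List.eq_iff_flatten_eq]
    exact ⟨h1, by rw [List.map_reverse, List.map_reverse, h2]⟩
  simpa using this

/-- Bottom lowering operator for a sorted biword. -/
def FB (i : ℕ) (L : List (ℕ × ℕ)) : Option (List (ℕ × ℕ)) :=
  (rightUnmatched (L.map Prod.snd) i).map
    (fun p => sortLex (L.set p ((L.getD p (0, 0)).1, i + 1)))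

theorem map_fst_set (L : List (ℕ × ℕ)) (p x : ℕ) :
    (L.set p ((L.getD p (0, 0)).1, x)).map Prod.fst = L.map Prod.fst := by
  rw [List.map_set]
  apply List.ext_getElem?
  intro k
  rw [List.getElem?_set]
  split_ifs with h1 h2
  · subst h1
    simp at h2
    simp [h2]
  · subst h1
    rw [eq_comm, List.getElem?_eq_none_iff]; omega
  · rfl

theorem FB_main (i : ℕ) (L : List (ℕ × ℕ)) (hL : L.Pairwise lexLe) :
    ((FB i L).isSome ↔ (fLower i (rsk L).1).isSome) ∧
    ∀ L', FB i L = some L' → ∃ P', fLower i (rsk L).1 = some P' ∧ rsk L' = (P', (rsk L).2) := by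
  have hw := fW_eq (L.map Prod.snd) i
  unfold FB
  obtain ⟨-, c⟩ := crystal_rsk i L
  have d := fLower_cases i (rsk L).1
  cases h : rightUnmatched (L.map Prod.snd) i with
  | none =>
    rw [h] at hw
    rcases c with ⟨c1, c2⟩ | ⟨L0, c1, c2, -⟩
    · rcases d with ⟨d1, d2⟩ | ⟨P', d1, d2, d3⟩
      · simp [d1]
      · rw [c2] at d2; simp at d2
    · rw [hw] at c2; simp at c2
  | some p =>
    rw [h] at hw
    simp only [Option.map_some] at hw
    rcases c with ⟨c1, c2⟩ | ⟨L0, c1, c2, c3, c4, c5⟩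
    · rw [hw] at c1; simp at c1
    · rcases d with ⟨d1, d2⟩ | ⟨P', d1, d2, d3⟩
      · rw [c5] at d2; simp at d2
      · have e1 : L.set p ((L.getD p (0, 0)).1, i + 1) = L0 := by
          apply pairs_ext
          · rw [map_fst_set, c1]
          · rw [List.map_set]
            rw [hw] at c2
            exact Option.some.inj c2
        have hs := fW_pairs_sorted i 0 L L0 c1 c2 hL
        have e2 : P' = (rsk L0).1 := by
          apply tableau_ext
          · rw [c5] at d2; exact (Option.some.inj d2).symm
          · rw [d3, c4]
        refine ⟨by simp [d1], ?_⟩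
        intro L' hL'
        rw [Option.map_some, e1, sortLex_eq (List.Perm.refl _) hs] at hL'
        have := Option.some.inj hL'
        subst this
        exact ⟨P', d1, by rw [e2, ← c3]⟩

theorem isRowBitab_iff (n m r : ℕ) (L : List (ℕ × ℕ)) : IsRowBitab n m r L ↔
    L.length = r ∧ (∀ p ∈ L, (1 ≤ p.1 ∧ p.1 ≤ n) ∧ (1 ≤ p.2 ∧ p.2 ≤ m)) ∧ L.Pairwise lexLe := by
  unfold IsRowBitab
  have : L.Chain' lexLe ↔ L.Pairwise lexLe := List.isChain_iff_pairwise
  rw [this]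

theorem isRowBitab_sw (n m r : ℕ) (L : List (ℕ × ℕ)) (h : IsRowBitab n m r L) :
    IsRowBitab m n r (sw L) := by
  rw [isRowBitab_iff] at h ⊢
  obtain ⟨h1, h2, h3⟩ := h
  refine ⟨?_, ?_, sw_sorted L⟩
  · rw [(sw_perm L).length_eq]; simpa using h1
  · rintro ⟨x, y⟩ hp
    have := h2 _ ((mem_sw L x y).1 hp)
    exact ⟨this.2, this.1⟩

theorem isRowBitab_FB (n m r i : ℕ) (L L' : List (ℕ × ℕ)) (h : IsRowBitab n m r L)
    (hi : i + 1 ≤ m) (hF : FB i L = some L') : IsRowBitab n m r L' := by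
  rw [isRowBitab_iff] at h ⊢
  obtain ⟨h1, h2, h3⟩ := h
  obtain ⟨p, hp, rfl⟩ := Option.map_eq_some_iff.1 hF
  refine ⟨?_, ?_, sortLex_sorted _⟩
  · rw [(sortLex_perm _).length_eq]; simpa using h1
  · intro q hq
    rw [(sortLex_perm _).mem_iff] at hq
    have hpl := rightUnmatched_lt _ _ _ hp
    rw [List.length_map] at hpl
    rcases List.mem_or_eq_of_mem_set hq with hq | rfl
    · exact h2 q hq
    · have := h2 (L[p]) (List.getElem_mem hpl)
      simp [hpl]
      omega

/-- Group the entries of `l` by the values `1,…,n` of a key. -/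
def groupBy' {α : Type} (n : ℕ) (f : α → ℕ) (l : List α) : List α :=
  (List.range n).flatMap fun k => l.filter fun t => decide (f t = k + 1)

theorem groupBy'_perm_aux {α : Type} (n : ℕ) (f : α → ℕ) (l : List α) (h : ∀ x ∈ l, 1 ≤ f x) :
    (groupBy' n f l).Perm (l.filter fun t => decide (f t ≤ n)) := by
  induction n with
  | zero =>
    have : l.filter (fun t => decide (f t ≤ 0)) = [] := by
      rw [List.filter_eq_nil_iff]; intro x hx; have := h x hx; simp; omega
    rw [this]; simp [groupBy']
  | succ n ih =>
    have e : groupBy' (n + 1) f l = groupBy' n f l ++ l.filter (fun t => decide (f t = n + 1)) := by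
      simp [groupBy', List.range_succ]
    rw [e]
    refine (ih.append_right _).trans ?_
    have := List.filter_append_perm (fun t => decide (f t ≤ n))
      (l.filter fun t => decide (f t ≤ n + 1))
    refine List.Perm.trans (List.Perm.of_eq ?_) this
    rw [List.filter_filter, List.filter_filter]
    congr 1
    · apply List.filter_congr; intro x _; rw [Bool.eq_iff_iff]; simp; omega
    · apply List.filter_congr; intro x _; rw [Bool.eq_iff_iff]; simp; omega

theorem groupBy'_perm {α : Type} (n : ℕ) (f : α → ℕ) (l : List α)
    (h : ∀ x ∈ l, 1 ≤ f x ∧ f x ≤ n) : (groupBy' n f l).Perm l := by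
  refine (groupBy'_perm_aux n f l (fun x hx => (h x hx).1)).trans (List.Perm.of_eq ?_)
  rw [List.filter_eq_self]
  intro x hx; simp [(h x hx).2]

theorem groupBy'_pairwise {α : Type} (n : ℕ) (f : α → ℕ) (l : List α) (r : α → α → Prop)
    (h : l.Pairwise r) :
    (groupBy' n f l).Pairwise (fun x y => f x < f y ∨ (f x = f y ∧ r x y)) := by
  unfold groupBy'
  rw [List.pairwise_flatMap]
  refine ⟨fun k _ => ?_, ?_⟩
  · have h2 := h.filter (fun t => decide (f t = k + 1))
    refine h2.imp_of_mem ?_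
    intro x y hx hy hr
    simp at hx hy
    right; exact ⟨by omega, hr⟩
  · refine List.pairwise_lt_range.imp ?_
    intro a b hab x hx y hy
    simp at hx hy
    left; omega

theorem range_map_getD (L : List (ℕ × ℕ)) (d : ℕ × ℕ) :
    (List.range L.length).map (fun t => L.getD t d) = L := by
  apply List.ext_getElem
  · simp
  · intro k h1 h2
    simp at h1
    simp [h1]

theorem groupBy'_map {α β : Type} (n : ℕ) (g : α → β) (f : β → ℕ) (l : List α) :
    (groupBy' n (fun t => f (g t)) l).map g = groupBy' n f (l.map g) := by
  unfold groupBy'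
  rw [List.map_flatMap]
  congr 1
  funext k
  rw [List.filter_map]
  rfl

/-- Modifying one entry, seen through a permuted reading order. -/
theorem idx_set (L : List (ℕ × ℕ)) (I : List ℕ) (hI : I.Perm (List.range L.length))
    (p : ℕ) (hp : p < I.length) (y : ℕ × ℕ) :
    (L.set (I.getD p 0) y).Perm ((I.map (fun t => L.getD t (0, 0))).set p y) := by
  have hnd : I.Nodup := hI.nodup_iff.2 List.nodup_range
  have e : I.map (fun t => (L.set (I.getD p 0) y).getD t (0, 0)) =
      (I.map (fun t => L.getD t (0, 0))).set p y := by
    apply List.ext_getElem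
    · simp
    · intro k h1 h2
      simp at h1
      have hm : I[p] < L.length := by
        have : I[p] ∈ I := List.getElem_mem hp
        rw [hI.mem_iff] at this
        simpa using this
      rw [List.getElem_map, List.getElem_set]
      split_ifs with hk
      · subst hk
        simp [hp, hm]
      · have : I[p] ≠ I[k] := by
          intro h'
          exact hk ((List.Nodup.getElem_inj_iff hnd).1 h')
        simp [hp, List.getElem?_set, this]
  rw [← e]
  have h2 := range_map_getD (L.set (I.getD p 0) y) (0, 0)
  rw [List.length_set] at h2
  exact (List.Perm.of_eq h2.symm).trans (hI.symm.map _)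

theorem Fbot_eq (n m r i : ℕ) (L : List (ℕ × ℕ)) (h : IsRowBitab n m r L) :
    Fbot n i L = FB i L := by
  rw [isRowBitab_iff] at h
  obtain ⟨h1, h2, h3⟩ := h
  have gL : groupBy' n Prod.fst L = L := by
    refine lex_eq_of_perm (groupBy'_perm n _ L (fun x hx => (h2 x hx).1)) ?_ h3
    refine (groupBy'_pairwise n Prod.fst L lexLe h3).imp ?_
    intro x y hxy
    rcases hxy with hxy | hxy
    · exact Or.inl hxy
    · exact hxy.2
  have hw : wRow n L = L.map Prod.snd := by
    conv_rhs => rw [← gL]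
    unfold wRow groupBy'
    rw [List.map_flatMap]
  have hI1 : wRowIdx n L = groupBy' n (fun t => (L.getD t (0, 0)).1) (List.range L.length) := rfl
  have hI : (wRowIdx n L).Perm (List.range L.length) := by
    rw [hI1]
    apply groupBy'_perm
    intro t ht
    simp at ht
    have := h2 L[t] (List.getElem_mem ht)
    simp [ht]; omega
  have hK : (wRowIdx n L).map (fun t => L.getD t (0, 0)) = L := by
    rw [hI1, groupBy'_map n (fun t => L.getD t (0, 0)) Prod.fst, range_map_getD, gL]
  unfold Fbot FB
  rw [hw]
  cases hp : rightUnmatched (L.map Prod.snd) i with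
  | none => rfl
  | some p =>
    have hpl := rightUnmatched_lt _ _ _ hp
    rw [List.length_map] at hpl
    have hpI : p < (wRowIdx n L).length := by rw [hI.length_eq]; simpa using hpl
    have hget : L.getD ((wRowIdx n L).getD p 0) (0, 0) = L.getD p (0, 0) := by
      have : ((wRowIdx n L).map (fun t => L.getD t (0, 0))).getD p (0, 0) = L.getD p (0, 0) := by
        rw [hK]
      rw [← this]
      simp [hpI]
    simp only [Option.map_some]
    rw [hget]
    congr 1
    have := idx_set L _ hI p hpI ((L.getD p (0, 0)).1, i + 1)
    rw [hK] at this
    exact sortLex_eq (this.trans (sortLex_perm _).symm) (sortLex_sorted _)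

theorem Ftop_eq (n m r j : ℕ) (L : List (ℕ × ℕ)) (h : IsRowBitab n m r L) :
    Ftop m j L = (FB j (sw L)).map sw := by
  rw [isRowBitab_iff] at h
  obtain ⟨h1, h2, h3⟩ := h
  have gL : groupBy' m Prod.snd L = (sw L).map Prod.swap := by
    have : sw L = (groupBy' m Prod.snd L).map Prod.swap := by
      apply sortLex_eq
      · exact ((groupBy'_perm m _ L (fun x hx => (h2 x hx).2)).map _).symm
      · rw [List.pairwise_map]
        refine (groupBy'_pairwise m Prod.snd L lexLe h3).imp ?_
        intro x y hxy
        unfold lexLe at *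
        simp only [Prod.fst_swap, Prod.snd_swap]
        omega
    rw [this]; simp
  have hw : uRow m L = (sw L).map Prod.snd := by
    have : (sw L).map Prod.snd = (groupBy' m Prod.snd L).map Prod.fst := by
      rw [gL]; simp [Function.comp_def]
    rw [this]
    unfold uRow groupBy'
    rw [List.map_flatMap]
  have hI1 : uRowIdx m L = groupBy' m (fun t => (L.getD t (0, 0)).2) (List.range L.length) := rfl
  have hI : (uRowIdx m L).Perm (List.range L.length) := by
    rw [hI1]
    apply groupBy'_perm
    intro t ht
    simp at ht
    have := h2 L[t] (List.getElem_mem ht)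
    simp [ht]; omega
  have hK : (uRowIdx m L).map (fun t => L.getD t (0, 0)) = (sw L).map Prod.swap := by
    rw [hI1, groupBy'_map m (fun t => L.getD t (0, 0)) Prod.snd, range_map_getD, gL]
  unfold Ftop FB
  rw [hw]
  cases hp : rightUnmatched ((sw L).map Prod.snd) j with
  | none => rfl
  | some p =>
    have hpl := rightUnmatched_lt _ _ _ hp
    rw [List.length_map] at hpl
    have hlen : (sw L).length = L.length := by rw [(sw_perm L).length_eq]; simp
    have hpI : p < (uRowIdx m L).length := by rw [hI.length_eq]; simp; omega
    have hget : L.getD ((uRowIdx m L).getD p 0) (0, 0) = ((sw L).getD p (0, 0)).swap := by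
      have : ((uRowIdx m L).map (fun t => L.getD t (0, 0))).getD p (0, 0) =
          ((sw L).getD p (0, 0)).swap := by
        rw [hK]; simp [hpl]
      rw [← this]
      simp [hpI]
    simp only [Option.map_some]
    rw [hget]
    congr 1
    have := idx_set L _ hI p hpI (j + 1, ((sw L).getD p (0, 0)).swap.2)
    rw [hK] at this
    apply sortLex_eq _ (sw_sorted _)
    refine this.trans ?_
    refine List.Perm.trans ?_ (sw_perm _).symm
    refine List.Perm.trans ?_ ((sortLex_perm _).symm.map _)
    rw [List.map_set]
    rfl

/-- RSK intertwines the crystal lowering operators on one-row bitableaux with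
the standard tableau lowering operators: `F_i^b(T)` is defined iff `f_i(P)` is, in which case
`F_i^b(T) ∈ B_{(r)}(n,m)` and `RSK(F_i^b(T)) = (f_i(P), Q)`; and `F_j^t(T)` is defined iff
`f_j(Q)` is, in which case `F_j^t(T) ∈ B_{(r)}(n,m)` and `RSK(F_j^t(T)) = (P, f_j(Q))`.
(Thus RSK is an isomorphism of `gl_n × gl_m`-crystals on one-row bitableaux.) -/
theorem stmt_8 (n m r : ℕ) (hn : 1 ≤ n) (hm : 1 ≤ m)
    (L : List (ℕ × ℕ)) (hL : IsRowBitab n m r L)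
    (i : ℕ) (hi1 : 1 ≤ i) (hi2 : i ≤ m - 1)
    (j : ℕ) (hj1 : 1 ≤ j) (hj2 : j ≤ n - 1) :
    ((Fbot n i L).isSome ↔ (fLower i (rsk L).1).isSome) ∧
    (∀ L', Fbot n i L = some L' →
      IsRowBitab n m r L' ∧
      ∃ P', fLower i (rsk L).1 = some P' ∧ rsk L' = (P', (rsk L).2)) ∧
    ((Ftop m j L).isSome ↔ (fLower j (rsk L).2).isSome) ∧
    (∀ L', Ftop m j L = some L' →
      IsRowBitab n m r L' ∧
      ∃ Q', fLower j (rsk L).2 = some Q' ∧ rsk L' = ((rsk L).1, Q')) := by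
  have hs := ((isRowBitab_iff n m r L).1 hL).2.2
  have hsw := isRowBitab_sw n m r L hL
  rw [Fbot_eq n m r i L hL, Ftop_eq n m r j L hL]
  obtain ⟨b1, b2⟩ := FB_main i L hs
  obtain ⟨t1, t2⟩ := FB_main j (sw L) (sw_sorted L)
  rw [rsk_sw L hs] at t1 t2
  refine ⟨b1, fun L' hL' => ⟨isRowBitab_FB n m r i L L' hL (by omega) hL', b2 L' hL'⟩, ?_, ?_⟩
  · rw [Option.isSome_map]; exact t1
  · intro L' hL'
    obtain ⟨M, hM, rfl⟩ := Option.map_eq_some_iff.1 hL'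
    have hMr := isRowBitab_FB m n r j (sw L) M hsw (by omega) hM
    refine ⟨isRowBitab_sw m n r M hMr, ?_⟩
    obtain ⟨P', k1, k2⟩ := t2 M hM
    refine ⟨P', k1, ?_⟩
    rw [rsk_sw M ((isRowBitab_iff m n r M).1 hMr).2.2, k2]
end

section
/- Let r, n, m ≥ 1 and let μ, ν be partitions of r with at most n and at most m parts respectively. Then the number of one-row lexicographic bitableaux T ∈ B_{(r)}(n,m) with a(T) = μ, b(T) = ν, and such that both w(T) and u(T) are Yamanouchi, equals 1 if μ = ν and 0 otherwise. -/
open scoped Classical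

/-- The `i`-th part (1-indexed) of a partition, `0` if `i` exceeds the number of parts. -/
def partAt {r : ℕ} (μ : Nat.Partition r) (i : ℕ) : ℕ :=
  (μ.parts.sort (· ≥ ·)).getD (i - 1) 0

/-- The list of entries of a one-row bitableau encoded by `v : Fin r → Fin n × Fin m`
(the box `t` has entry `((v t).1 + 1, (v t).2 + 1) ∈ {1,…,n} × {1,…,m}`). -/
def rowList {n m r : ℕ} (v : Fin r → Fin n × Fin m) : List (ℕ × ℕ) :=
  (List.ofFn v).map fun p => (((p.1 : ℕ) + 1, (p.2 : ℕ) + 1))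

def CC (L : List (ℕ × ℕ)) (i j : ℕ) : ℕ := L.countP (fun p => decide (i ≤ p.1 ∧ p.2 = j))
def NN (L : List (ℕ × ℕ)) (i j : ℕ) : ℕ := L.countP (fun p => decide (i ≤ p.1 ∧ j ≤ p.2))

lemma NN_eq (L : List (ℕ × ℕ)) (i j : ℕ) : NN L i j = CC L i j + NN L i (j+1) := by
  induction L with
  | nil => simp [NN, CC]
  | cons a L ih =>
    simp only [NN, CC, List.countP_cons, decide_eq_true_eq] at ih ⊢
    rw [ih]
    split_ifs <;> omega

lemma CC_eq (L : List (ℕ × ℕ)) (i j : ℕ) : CC L i j = L.count (i,j) + CC L (i+1) j := by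
  induction L with
  | nil => simp [CC]
  | cons a L ih =>
    obtain ⟨x, y⟩ := a
    simp only [CC, List.countP_cons, List.count_cons, decide_eq_true_eq, beq_iff_eq,
      Prod.mk.injEq] at ih ⊢
    rw [ih]
    split_ifs <;> omega

lemma NN_swap (L : List (ℕ × ℕ)) (i j : ℕ) : NN (L.map Prod.swap) i j = NN L j i := by
  simp only [NN, List.countP_map]
  congr 1
  funext p
  simp [and_comm]

lemma count_swap (L : List (ℕ × ℕ)) (i j : ℕ) : (L.map Prod.swap).count (i, j) = L.count (j, i) :=
  List.count_map_of_injective L Prod.swap Prod.swap_injective (j, i)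

lemma uRow_eq (m : ℕ) (L : List (ℕ × ℕ)) : uRow m L = wRow m (L.map Prod.swap) := by
  simp only [uRow, wRow, List.filter_map, List.map_map]
  rfl

lemma filt_snd (L : List (ℕ × ℕ)) (h : ∀ p ∈ L, 1 ≤ p.1) (j : ℕ) :
    (L.filter fun p => decide (p.2 = j)).length = CC L 1 j := by
  rw [← List.countP_eq_length_filter, CC]
  apply List.countP_congr
  intro p hp
  simp [h p hp]

lemma filt_fst (L : List (ℕ × ℕ)) (h : ∀ p ∈ L, 1 ≤ p.2) (i : ℕ) :
    (L.filter fun p => decide (p.1 = i)).length = CC (L.map Prod.swap) 1 i := by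
  rw [← filt_snd]
  · rw [List.filter_map, List.length_map]; rfl
  · intro p hp
    obtain ⟨q, hq, rfl⟩ := List.mem_map.1 hp
    exact h q hq

lemma CC_zero (L : List (ℕ × ℕ)) (n : ℕ) (h : ∀ p ∈ L, p.1 ≤ n) (i j : ℕ) (hi : n < i) :
    CC L i j = 0 := by
  rw [CC, List.countP_eq_zero]
  intro p hp
  have := h p hp
  simp only [decide_eq_true_eq]
  omega

lemma NN_zero (L : List (ℕ × ℕ)) (n : ℕ) (h : ∀ p ∈ L, p.1 ≤ n) (i j : ℕ) (hi : n < i) :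
    NN L i j = 0 := by
  rw [NN, List.countP_eq_zero]
  intro p hp
  have := h p hp
  simp only [decide_eq_true_eq]
  omega

lemma NN_zero' (L : List (ℕ × ℕ)) (n : ℕ) (h : ∀ p ∈ L, p.2 ≤ n) (i j : ℕ) (hi : n < j) :
    NN L i j = 0 := by
  rw [NN, List.countP_eq_zero]
  intro p hp
  have := h p hp
  simp only [decide_eq_true_eq]
  omega

/-! Yamanouchi criterion -/

lemma yam_append_imp (row rest : List ℕ) (hs : row.Pairwise (· ≤ ·))
    (h : Yamanouchi (row ++ rest)) (j : ℕ) (hj : 1 ≤ j) :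
    row.count (j+1) + rest.count (j+1) ≤ rest.count j := by
  induction row with
  | nil => simpa using h j hj rest (by simp)
  | cons a row ih =>
    have h' : Yamanouchi (row ++ rest) := by
      intro i hi s hsf
      refine h i hi s ?_
      rw [List.mem_tails] at hsf ⊢
      exact hsf.trans (List.suffix_cons a _)
    have hp := List.pairwise_cons.1 hs
    by_cases ha : a ≤ j
    · have := ih hp.2 h'
      rw [List.count_cons_of_ne (by omega)]
      exact this
    · have h0 : (a :: row).count j = 0 := by
        rw [List.count_eq_zero]
        intro hm
        rcases List.mem_cons.1 hm with h1 | h1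
        · omega
        · have := hp.1 _ h1; omega
      have := h j hj (a :: row ++ rest) (by simp [List.mem_tails])
      rw [List.count_append, List.count_append, h0] at this
      omega

lemma yam_append (row rest : List ℕ) (hs : row.Pairwise (· ≤ ·)) :
    Yamanouchi (row ++ rest) ↔ Yamanouchi rest ∧
      ∀ j, 1 ≤ j → row.count (j+1) + rest.count (j+1) ≤ rest.count j := by
  constructor
  · intro h
    refine ⟨?_, yam_append_imp row rest hs h⟩
    intro i hi s hsf
    refine h i hi s ?_
    rw [List.mem_tails] at hsf ⊢
    exact hsf.trans (List.suffix_append _ _)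
  · rintro ⟨h1, h2⟩ i hi s hsf
    rw [List.mem_tails] at hsf
    rcases List.suffix_or_suffix_of_suffix hsf (List.suffix_append row rest) with h | ⟨t, rfl⟩
    · exact h1 i hi s (by rwa [List.mem_tails])
    · have := h2 i hi
      have ht : t <:+ row := by
        obtain ⟨q, hq⟩ := hsf
        rw [← List.append_assoc] at hq
        exact ⟨q, List.append_cancel_right hq⟩
      have hc := ht.sublist.count_le (i+1)
      rw [List.count_append, List.count_append]
      omega

def rowK (L : List (ℕ × ℕ)) (k : ℕ) : List ℕ :=
  (L.filter fun p => decide (p.1 = k + 1)).map Prod.snd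

lemma count_rowK (L : List (ℕ × ℕ)) (k j : ℕ) : (rowK L k).count j = L.count (k+1, j) := by
  induction L with
  | nil => simp [rowK]
  | cons a L ih =>
    obtain ⟨x, y⟩ := a
    simp only [rowK] at ih ⊢
    rw [List.filter_cons, List.count_cons, ← ih]
    by_cases hx : x = k + 1
    · subst hx
      simp [List.count_cons]
    · simp [hx]

lemma count_flat (L : List (ℕ × ℕ)) (len : ℕ) : ∀ (s : ℕ) (_ : ∀ p ∈ L, p.1 ≤ s + len) (j : ℕ),
    ((List.range' s len).flatMap (rowK L)).count j = CC L (s+1) j := by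
  induction len with
  | zero => intro s h j; simp [CC_zero L s h (s+1) j (by omega)]
  | succ len ih =>
    intro s h j
    rw [List.range'_succ, List.flatMap_cons, List.count_append, count_rowK, CC_eq,
      ih (s+1) (fun p hp => by have := h p hp; omega)]

lemma yam_flat (L : List (ℕ × ℕ)) (hL : L.Pairwise fun p q => p.1 = q.1 → p.2 ≤ q.2) (len : ℕ) :
    ∀ (s : ℕ) (_ : ∀ p ∈ L, p.1 ≤ s + len),
    (Yamanouchi ((List.range' s len).flatMap (rowK L)) ↔
      ∀ i, s + 1 ≤ i → ∀ j, 1 ≤ j → CC L i (j+1) ≤ CC L (i+1) j) := by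
  induction len with
  | zero =>
    intro s h
    constructor
    · intro _ i hi j hj
      rw [CC_zero L s h i _ (by omega)]; omega
    · intro _ i hi t ht
      simp at ht
      simp [ht]
  | succ len ih =>
    intro s h
    have h' : ∀ p ∈ L, p.1 ≤ (s + 1) + len := fun p hp => by have := h p hp; omega
    have hsort : (rowK L s).Pairwise (· ≤ ·) := by
      rw [rowK, List.pairwise_map, List.pairwise_filter]
      refine hL.imp ?_
      intro a b hab ha hb
      simp only [decide_eq_true_eq] at ha hb
      exact hab (by omega)
    rw [List.range'_succ, List.flatMap_cons, yam_append _ _ hsort, ih (s+1) h']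
    simp only [count_flat L len (s+1) h', count_rowK, ← CC_eq]
    constructor
    · rintro ⟨h1, h2⟩ i hi j hj
      rcases Nat.eq_or_lt_of_le hi with rfl | hlt
      · exact h2 j hj
      · exact h1 i hlt j hj
    · intro h1
      exact ⟨fun i hi => h1 i (by omega), h1 (s+1) le_rfl⟩

lemma yam_wRow (n : ℕ) (L : List (ℕ × ℕ)) (hL : L.Pairwise fun p q => p.1 = q.1 → p.2 ≤ q.2)
    (h : ∀ p ∈ L, p.1 ≤ n) : Yamanouchi (wRow n L) ↔
      ∀ i, 1 ≤ i → ∀ j, 1 ≤ j → CC L i (j+1) ≤ CC L (i+1) j := by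
  have := yam_flat L hL n 0 (by simpa using h)
  rw [← List.range_eq_range', zero_add] at this
  exact this

lemma NN_le (m : ℕ) (L : List (ℕ × ℕ)) (h : ∀ p ∈ L, p.2 ≤ m)
    (H : ∀ i, 1 ≤ i → ∀ j, 1 ≤ j → CC L i (j+1) ≤ CC L (i+1) j) (i : ℕ) (hi : 1 ≤ i) (d : ℕ) :
    ∀ j, 1 ≤ j → m ≤ j + d → NN L i (j+1) ≤ NN L (i+1) j := by
  induction d with
  | zero =>
    intro j hj hd
    rw [NN_zero' L m h i (j+1) (by omega)]; omega
  | succ d ih =>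
    intro j hj hd
    have := ih (j+1) (by omega) (by omega)
    have := H i hi j hj
    rw [NN_eq L i (j+1), NN_eq L (i+1) j]
    omega

instance inst_s9 : IsTrans (ℕ × ℕ) lexLe := ⟨fun a b c h1 h2 => by unfold lexLe at *; omega⟩
instance : Std.Antisymm lexLe := ⟨fun a b h1 h2 => by
  unfold lexLe at *; exact Prod.ext (by omega) (by omega)⟩
instance inst_s9_2 : Std.Total lexLe := ⟨fun a b => by unfold lexLe; omega⟩

structure Good (n m : ℕ) (L : List (ℕ × ℕ)) : Prop where
  bd : ∀ p ∈ L, (1 ≤ p.1 ∧ p.1 ≤ n) ∧ (1 ≤ p.2 ∧ p.2 ≤ m)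
  pw : L.Pairwise lexLe

lemma Good.yamw {n m : ℕ} {L : List (ℕ × ℕ)} (g : Good n m L) : Yamanouchi (wRow n L) ↔
    ∀ i, 1 ≤ i → ∀ j, 1 ≤ j → CC L i (j+1) ≤ CC L (i+1) j :=
  yam_wRow n L (g.pw.imp fun {a b} h e => by unfold lexLe at h; omega) (fun p hp => (g.bd p hp).1.2)

lemma Good.yamu {n m : ℕ} {L : List (ℕ × ℕ)} (g : Good n m L) : Yamanouchi (uRow m L) ↔
    ∀ i, 1 ≤ i → ∀ j, 1 ≤ j →
      CC (L.map Prod.swap) i (j+1) ≤ CC (L.map Prod.swap) (i+1) j := by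
  rw [uRow_eq]
  apply yam_wRow
  · rw [List.pairwise_map]
    refine g.pw.imp fun {a b} h e => ?_
    unfold lexLe at h
    simp only [Prod.fst_swap, Prod.snd_swap] at e ⊢
    omega
  · intro p hp
    obtain ⟨q, hq, rfl⟩ := List.mem_map.1 hp
    exact (g.bd q hq).2.2

/-- The key symmetry. -/
lemma Good.key {n m : ℕ} {L : List (ℕ × ℕ)} (g : Good n m L) (hw : Yamanouchi (wRow n L))
    (hu : Yamanouchi (uRow m L)) (i j : ℕ) (hi : 1 ≤ i) (hj : 1 ≤ j) :
    NN L i (j+1) = NN L (i+1) j := by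
  apply le_antisymm
  · exact NN_le m L (fun p hp => (g.bd p hp).2.2) (g.yamw.1 hw) i hi m j hj (by omega)
  · have := NN_le n (L.map Prod.swap) (fun p hp => by
      obtain ⟨q, hq, rfl⟩ := List.mem_map.1 hp
      exact (g.bd q hq).1.2) (g.yamu.1 hu) j hj n i hi (by omega)
    rwa [NN_swap, NN_swap] at this

lemma Good.key' {n m : ℕ} {L : List (ℕ × ℕ)} (g : Good n m L) (hw : Yamanouchi (wRow n L))
    (hu : Yamanouchi (uRow m L)) (j : ℕ) : ∀ (i : ℕ) (_ : 1 ≤ i), NN L i (j+1) = NN L (i+j) 1 := by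
  induction j with
  | zero => intro i hi; rfl
  | succ j ih =>
    intro i hi
    rw [g.key hw hu i (j+1) hi (by omega), ih (i+1) (by omega)]
    congr 1
    omega

lemma partAt_zero {r : ℕ} (μ : Nat.Partition r) (i : ℕ) (h : μ.parts.card < i) :
    partAt μ i = 0 := by
  rw [partAt, List.getD_eq_default]
  rw [Multiset.length_sort]; omega

lemma getD_anti (l : List ℕ) (h : l.Pairwise (· ≥ ·)) (k : ℕ) : l.getD (k+1) 0 ≤ l.getD k 0 := by
  by_cases hk : k + 1 < l.length
  · rw [List.getD_eq_getElem _ _ hk, List.getD_eq_getElem _ _ (by omega)]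
    exact List.pairwise_iff_getElem.1 h k (k+1) (by omega) hk (by omega)
  · rw [List.getD_eq_default _ _ (by omega)]; omega

lemma partAt_anti {r : ℕ} (μ : Nat.Partition r) (i : ℕ) (h : 1 ≤ i) :
    partAt μ (i+1) ≤ partAt μ i := by
  obtain ⟨k, rfl⟩ : ∃ k, i = k + 1 := ⟨i-1, by omega⟩
  exact getD_anti _ (Multiset.pairwise_sort _ _) k

lemma sum_getD (l : List ℕ) : ∀ m, l.length ≤ m → ∑ k ∈ Finset.range m, l.getD k 0 = l.sum := by
  induction l with
  | nil => intro m _; simp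
  | cons a l ih =>
    intro m hm
    obtain ⟨m, rfl⟩ : ∃ k, m = k + 1 := ⟨m-1, by simp at hm; omega⟩
    rw [Finset.sum_range_succ']
    simp only [List.getD_cons_succ, List.getD_cons_zero, List.sum_cons]
    rw [ih m (by simpa using hm)]
    omega

lemma sum_partAt {r : ℕ} (μ : Nat.Partition r) (m : ℕ) (h : μ.parts.card ≤ m) :
    ∑ k ∈ Finset.range m, partAt μ (k+1) = r := by
  simp only [partAt, Nat.add_sub_cancel]
  rw [sum_getD _ _ (by rwa [Multiset.length_sort])]
  rw [← Multiset.sum_coe, Multiset.sort_eq, μ.parts_sum]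

lemma getD_inj (l : List ℕ) : ∀ l' : List ℕ, (∀ x ∈ l, 0 < x) → (∀ x ∈ l', 0 < x) →
    (∀ k, l.getD k 0 = l'.getD k 0) → l = l' := by
  induction l with
  | nil =>
    intro l' _ h' h
    cases l' with
    | nil => rfl
    | cons b l' => have := h 0; have := h' b (by simp); simp at *; omega
  | cons a l ih =>
    intro l' h1 h' h
    cases l' with
    | nil => have := h 0; have := h1 a (by simp); simp at *; omega
    | cons b l' =>
      have h0 : a = b := by simpa using h 0
      rw [h0, ih l' (fun x hx => h1 x (by simp [hx])) (fun x hx => h' x (by simp [hx]))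
        (fun k => by simpa using h (k+1))]

lemma partAt_inj {r : ℕ} (μ ν : Nat.Partition r) (h : ∀ i, 1 ≤ i → partAt μ i = partAt ν i) :
    μ = ν := by
  have : μ.parts.sort (· ≥ ·) = ν.parts.sort (· ≥ ·) := by
    apply getD_inj
    · intro x hx; exact μ.parts_pos (by simpa using hx)
    · intro x hx; exact ν.parts_pos (by simpa using hx)
    · intro k; exact h (k+1) (by omega)
  apply Nat.Partition.ext
  rw [← Multiset.sort_eq μ.parts (· ≥ ·), this, Multiset.sort_eq]

/-- Tail sums of rows are determined by `μ`. -/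
lemma Good.mu {r n m : ℕ} {L : List (ℕ × ℕ)} (g : Good n m L) (μ : Nat.Partition r)
    (hμ : μ.parts.card ≤ n)
    (h : ∀ i ∈ Finset.Icc 1 n, (L.filter fun p => decide (p.1 = i)).length = partAt μ i)
    (i : ℕ) (hi : 1 ≤ i) : NN L i 1 = partAt μ i + NN L (i+1) 1 := by
  by_cases hn : i ≤ n
  · rw [← h i (Finset.mem_Icc.2 ⟨hi, hn⟩), filt_fst L (fun p hp => (g.bd p hp).2.1),
      ← NN_swap L 1 i, ← NN_swap L 1 (i+1), NN_eq]
  · rw [partAt_zero μ i (by omega), NN_zero L n (fun p hp => (g.bd p hp).1.2) _ _ (by omega),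
      NN_zero L n (fun p hp => (g.bd p hp).1.2) _ _ (by omega)]

lemma Good.nu {r n m : ℕ} {L : List (ℕ × ℕ)} (g : Good n m L) (ν : Nat.Partition r)
    (hν : ν.parts.card ≤ m)
    (h : ∀ i ∈ Finset.Icc 1 m, (L.filter fun p => decide (p.2 = i)).length = partAt ν i)
    (i : ℕ) (hi : 1 ≤ i) : NN L 1 i = partAt ν i + NN L 1 (i+1) := by
  by_cases hn : i ≤ m
  · rw [← h i (Finset.mem_Icc.2 ⟨hi, hn⟩), filt_snd L (fun p hp => (g.bd p hp).1.1), NN_eq]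
  · rw [partAt_zero ν i (by omega), NN_zero' L m (fun p hp => (g.bd p hp).2.2) _ _ (by omega),
      NN_zero' L m (fun p hp => (g.bd p hp).2.2) _ _ (by omega)]

lemma NN_unique {n r : ℕ} (μ : Nat.Partition r) (L L' : List (ℕ × ℕ))
    (hL : ∀ p ∈ L, p.1 ≤ n) (hL' : ∀ p ∈ L', p.1 ≤ n)
    (h : ∀ i, 1 ≤ i → NN L i 1 = partAt μ i + NN L (i+1) 1)
    (h' : ∀ i, 1 ≤ i → NN L' i 1 = partAt μ i + NN L' (i+1) 1) (d : ℕ) :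
    ∀ i, 1 ≤ i → n < i + d → NN L i 1 = NN L' i 1 := by
  induction d with
  | zero => intro i hi hd; rw [NN_zero L n hL _ _ (by omega), NN_zero L' n hL' _ _ (by omega)]
  | succ d ih => intro i hi hd; rw [h i hi, h' i hi, ih (i+1) (by omega) (by omega)]

lemma unique_list {n m : ℕ} {L L' : List (ℕ × ℕ)} (g : Good n m L) (g' : Good n m L')
    (h : ∀ i j, 1 ≤ i → 1 ≤ j → NN L i j = NN L' i j) : L = L' := by
  refine List.Perm.eq_of_pairwise (le := lexLe) (fun a b _ _ h1 h2 => antisymm h1 h2) g.pw g'.pw ?_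
  rw [List.perm_iff_count]
  rintro ⟨i, j⟩
  by_cases hij : 1 ≤ i ∧ 1 ≤ j
  · obtain ⟨hi, hj⟩ := hij
    have := NN_eq L i j
    have := NN_eq L' i j
    have := NN_eq L (i+1) j
    have := NN_eq L' (i+1) j
    have := CC_eq L i j
    have := CC_eq L' i j
    have := h i j hi hj
    have := h i (j+1) hi (by omega)
    have := h (i+1) j (by omega) hj
    have := h (i+1) (j+1) (by omega) (by omega)
    omega
  · rw [List.count_eq_zero_of_not_mem, List.count_eq_zero_of_not_mem]
    · intro hm; have := g'.bd _ hm; simp at this; omega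
    · intro hm; have := g.bd _ hm; simp at this; omega

lemma rowList_inj {n m r : ℕ} {v v' : Fin r → Fin n × Fin m} (h : rowList v = rowList v') :
    v = v' := by
  unfold rowList at h
  refine List.ofFn_injective (List.map_injective_iff.2 ?_ h)
  rintro ⟨a, b⟩ ⟨c, d⟩ hab
  simp only [Prod.mk.injEq] at hab
  exact Prod.ext (Fin.ext (by simp; omega)) (Fin.ext (by simp; omega))

lemma exists_rowList {n m r : ℕ} (L : List (ℕ × ℕ)) (g : Good n m L) (hr : L.length = r) :
    ∃ v : Fin r → Fin n × Fin m, rowList v = L := by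
  subst hr
  refine ⟨fun t => (⟨(L.get t).1 - 1, ?_⟩, ⟨(L.get t).2 - 1, ?_⟩), ?_⟩
  · have := g.bd _ (L.get_mem t); omega
  · have := g.bd _ (L.get_mem t); omega
  · unfold rowList
    apply List.ext_getElem
    · simp
    · intro k h1 h2
      have := g.bd _ (L.getElem_mem h2)
      simp only [List.getElem_map, List.getElem_ofFn, List.get_eq_getElem]
      exact Prod.ext (by simp; omega) (by simp; omega)

lemma CC_lam (lam : ℕ → ℕ) (n : ℕ) (L : List (ℕ × ℕ)) (h : ∀ p ∈ L, p.1 ≤ n)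
    (h0 : ∀ k, n < k → lam k = 0) (ha : ∀ k, 1 ≤ k → lam (k+1) ≤ lam k)
    (hc : ∀ i j, 1 ≤ i → 1 ≤ j → L.count (i,j) = lam (i+j-1) - lam (i+j)) (d : ℕ) :
    ∀ i j, 1 ≤ i → 1 ≤ j → n < i + d → CC L i j = lam (i+j-1) := by
  induction d with
  | zero =>
    intro i j hi hj hd
    rw [CC_zero L n h _ _ (by omega), h0 _ (by omega)]
  | succ d ih =>
    intro i j hi hj hd
    rw [CC_eq, hc i j hi hj, ih (i+1) j (by omega) hj (by omega)]
    have := ha (i+j-1) (by omega)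
    rw [show i + j - 1 + 1 = i + j by omega] at this
    rw [show i + 1 + j - 1 = i + j by omega]
    omega

lemma NN_sum (L : List (ℕ × ℕ)) (m : ℕ) (h : ∀ p ∈ L, p.2 ≤ m) :
    NN L 1 1 = ∑ k ∈ Finset.range m, CC L 1 (k+1) := by
  have : ∀ d, NN L 1 1 = ∑ k ∈ Finset.range d, CC L 1 (k+1) + NN L 1 (d+1) := by
    intro d
    induction d with
    | zero => simp
    | succ d ih => rw [ih, Finset.sum_range_succ, NN_eq L 1 (d+1)]; omega
  rw [this m, NN_zero' L m h _ _ (by omega), add_zero]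

lemma exists_list {r n m : ℕ} (μ : Nat.Partition r) (hn : μ.parts.card ≤ n)
    (hm : μ.parts.card ≤ m) : ∃ L : List (ℕ × ℕ), Good n m L ∧
      ∀ i j, 1 ≤ i → 1 ≤ j → L.count (i,j) = partAt μ (i+j-1) - partAt μ (i+j) := by
  let S : Multiset (ℕ × ℕ) := ∑ x ∈ Finset.Icc 1 n ×ˢ Finset.Icc 1 m,
    Multiset.replicate (partAt μ (x.1+x.2-1) - partAt μ (x.1+x.2)) x
  refine ⟨S.sort lexLe, ⟨?_, Multiset.pairwise_sort _ _⟩, ?_⟩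
  · intro p hp
    rw [Multiset.mem_sort] at hp
    obtain ⟨x, hx, hpx⟩ := Multiset.mem_sum.1 hp
    rw [Multiset.eq_of_mem_replicate hpx]
    simpa using hx
  · intro i j hi hj
    have hcount : List.count (i, j) (S.sort lexLe) = Multiset.count (i, j) S := by
      conv_rhs => rw [← Multiset.sort_eq S lexLe, Multiset.coe_count]
      congr 1
      exact lawful_beq_subsingleton _ _
    rw [hcount]
    simp only [S, Multiset.count_sum', Multiset.count_replicate]
    rw [Finset.sum_ite_eq']
    split_ifs with h
    · rfl
    · simp only [Finset.mem_product, Finset.mem_Icc] at h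
      rw [partAt_zero μ (i+j-1) (by omega)]; omega

lemma filt_one {α : Type*} [Fintype α] {P : α → Prop} {D : DecidablePred P} (x : α) (hx : P x)
    (hu : ∀ y, P y → y = x) : (@Finset.filter α P D Finset.univ).card = 1 := by
  rw [Finset.card_eq_one]
  refine ⟨x, Finset.eq_singleton_iff_unique_mem.2 ⟨by simpa using hx, fun y hy => hu y ?_⟩⟩
  simpa using hy

lemma filt_none {α : Type*} [Fintype α] {P : α → Prop} {D : DecidablePred P}
    (hu : ∀ y, ¬ P y) : (@Finset.filter α P D Finset.univ).card = 0 := by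
  rw [Finset.card_eq_zero, Finset.filter_eq_empty_iff]
  intro y _
  exact hu y

/-- Let `μ ⊢ r` have at most `n` parts and `ν ⊢ r` have at most `m` parts.
The number of one-row lexicographic bitableaux `T ∈ B_{(r)}(n,m)` with `a(T) = μ`,
`b(T) = ν`, and both `w(T)` and `u(T)` Yamanouchi is `1` if `μ = ν` and `0` otherwise. -/
theorem stmt_9 (r n m : ℕ) (hn : 1 ≤ n) (hm : 1 ≤ m)
    (μ ν : Nat.Partition r) (hμ : μ.parts.card ≤ n) (hν : ν.parts.card ≤ m) :
    ((Finset.univ : Finset (Fin r → Fin n × Fin m)).filter fun v =>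
        IsRowBitab n m r (rowList v) ∧
        (∀ i ∈ Finset.Icc 1 n, ((rowList v).filter fun p => decide (p.1 = i)).length = partAt μ i) ∧
        (∀ j ∈ Finset.Icc 1 m, ((rowList v).filter fun p => decide (p.2 = j)).length = partAt ν j) ∧
        Yamanouchi (wRow n (rowList v)) ∧ Yamanouchi (uRow m (rowList v))).card =
      if μ = ν then 1 else 0 := by
  have hgood : ∀ v : Fin r → Fin n × Fin m, IsRowBitab n m r (rowList v) → Good n m (rowList v) :=
    fun v h => ⟨h.2.1, List.isChain_iff_pairwise.1 h.2.2⟩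
  split_ifs with heq
  · subst heq
    obtain ⟨L, g, hc⟩ := exists_list μ hμ hν
    have hC : ∀ i j, 1 ≤ i → 1 ≤ j → CC L i j = partAt μ (i+j-1) := fun i j hi hj =>
      CC_lam (partAt μ) n L (fun p hp => (g.bd p hp).1.2) (fun k hk => partAt_zero μ k (by omega))
        (partAt_anti μ) hc (n+1) i j hi hj (by omega)
    have hC' : ∀ i j, 1 ≤ i → 1 ≤ j → CC (L.map Prod.swap) i j = partAt μ (i+j-1) :=
      fun i j hi hj =>
      CC_lam (partAt μ) m (L.map Prod.swap) (fun p hp => by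
          obtain ⟨q, hq, rfl⟩ := List.mem_map.1 hp
          exact (g.bd q hq).2.2) (fun k hk => partAt_zero μ k (by omega))
        (partAt_anti μ) (fun i j hi hj => by
          rw [count_swap, hc j i hj hi, add_comm j i]) (m+1) i j hi hj (by omega)
    have hlen : L.length = r := by
      have h1 : NN L 1 1 = L.length := by
        rw [NN, List.countP_eq_length]
        intro p hp
        have := g.bd p hp
        simp only [decide_eq_true_eq]; omega
      rw [← h1, NN_sum L m (fun p hp => (g.bd p hp).2.2), ← sum_partAt μ m hν]
      refine Finset.sum_congr rfl fun k _ => ?_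
      rw [hC 1 (k+1) le_rfl (by omega)]
      congr 1; omega
    obtain ⟨v, hv⟩ := exists_rowList L g hlen
    refine filt_one v ?_ ?_
    · rw [hv]
      refine ⟨⟨hlen, g.bd, List.isChain_iff_pairwise.2 g.pw⟩, ?_, ?_, ?_, ?_⟩
      · intro i hi
        have hi := (Finset.mem_Icc.1 hi).1
        rw [filt_fst L (fun p hp => (g.bd p hp).2.1), hC' 1 i le_rfl hi]
        congr 1; omega
      · intro i hi
        have hi := (Finset.mem_Icc.1 hi).1
        rw [filt_snd L (fun p hp => (g.bd p hp).1.1), hC 1 i le_rfl hi]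
        congr 1; omega
      · rw [g.yamw]
        intro i hi j hj
        rw [hC i (j+1) hi (by omega), hC (i+1) j (by omega) hj]
        apply le_of_eq; congr 1; omega
      · rw [g.yamu]
        intro i hi j hj
        rw [hC' i (j+1) hi (by omega), hC' (i+1) j (by omega) hj]
        apply le_of_eq; congr 1; omega
    · rintro v' ⟨hb, ha, -, hw, hu⟩
      have g' := hgood v' hb
      have hLw : Yamanouchi (wRow n L) := by
        rw [g.yamw]
        intro i hi j hj
        rw [hC i (j+1) hi (by omega), hC (i+1) j (by omega) hj]
        apply le_of_eq; congr 1; omega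
      have hLu : Yamanouchi (uRow m L) := by
        rw [g.yamu]
        intro i hi j hj
        rw [hC' i (j+1) hi (by omega), hC' (i+1) j (by omega) hj]
        apply le_of_eq; congr 1; omega
      have hLa : ∀ i ∈ Finset.Icc 1 n,
          (L.filter fun p => decide (p.1 = i)).length = partAt μ i := by
        intro i hi
        have hi := (Finset.mem_Icc.1 hi).1
        rw [filt_fst L (fun p hp => (g.bd p hp).2.1), hC' 1 i le_rfl hi]
        congr 1; omega
      apply rowList_inj
      rw [hv]
      apply unique_list g' g
      intro i j hi hj
      obtain ⟨j, rfl⟩ : ∃ k, j = k + 1 := ⟨j-1, by omega⟩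
      rw [g'.key' hw hu j i hi, g.key' hLw hLu j i hi]
      exact NN_unique (n := n) μ _ _ (fun p hp => (g'.bd p hp).1.2) (fun p hp => (g.bd p hp).1.2)
        (g'.mu μ hμ ha) (g.mu μ hμ hLa) (n+1) _ (by omega) (by omega)
  · apply filt_none
    rintro v ⟨hb, ha, hbw, hw, hu⟩
    have g := hgood v hb
    apply heq
    apply partAt_inj
    intro i hi
    obtain ⟨i, rfl⟩ : ∃ k, i = k + 1 := ⟨i-1, by omega⟩
    have h1 := g.mu μ hμ ha (i+1) hi
    have h2 := g.nu ν hν hbw (i+1) hi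
    rw [g.key' hw hu i 1 le_rfl, g.key' hw hu (i+1) 1 le_rfl, show 1 + i = i + 1 by omega,
      show 1 + (i + 1) = i + 1 + 1 by omega] at h2
    omega
end
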